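/- arXiv:2501.11991 — 8 statements merged into one kernel-verified Lean document; each statement's English description precedes it below -/
import Mathlib

section
/- Let k ≥ 2 be an integer. Set φ = (1 - x(t-1))/(2x(t-1)) and γ(x,t) = k/(1 - 3x(t-1)) - (2x(t-1)/(1 - 3x(t-1))²)·(U_k(φ) - U_{k-1}(φ) - 1)/U_k(φ). Then the two-variable generating function F_k(x,t) = Σ_{n≥0} (Σ_{w∈[k]^n} t^{s(w)}) x^n satisfies F_k(x,t) = 1/(1 - x·γ(x,t)), as an identity of (formal) series wherever the right-hand side is defined (i.e., for parameter values with x(t-1) ≠ 0, 1 - 3x(t-1) ≠ 0, U_k(φ) ≠ 0, and 1 - xγ(x,t) ≠ 0). -/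
/-- Evaluation of the Chebyshev polynomial of the second kind `U_n` at a real `x`
(indices extended to all integers via the Chebyshev recurrence). -/
noncomputable def chebU (n : ℤ) (x : ℝ) : ℝ := (Polynomial.Chebyshev.U ℝ n).eval x

/-- The statistic `s(w)`: the number of indices `1 ≤ i ≤ n-1` with `|w_{i+1} - w_i| ≤ 1`,
for a word `w` of length `n` over the alphabet `{1,…,k}` (encoded as `Fin n → Fin k`). -/
def statS {k n : ℕ} (w : Fin n → Fin k) : ℕ :=
  (Finset.univ.filter fun i : Fin (n - 1) =>
    |((w ⟨(i : ℕ) + 1, by have := i.isLt; omega⟩ : ℕ) : ℤ) -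
      ((w ⟨(i : ℕ), by have := i.isLt; omega⟩ : ℕ) : ℤ)| ≤ 1).card

/-- `φ = (1 - x(t-1))/(2x(t-1))`. -/
noncomputable def phi (x t : ℝ) : ℝ := (1 - x * (t - 1)) / (2 * x * (t - 1))

/-- `γ(x,t) = k/(1 - 3x(t-1)) - (2x(t-1)/(1 - 3x(t-1))²)·(U_k(φ) - U_{k-1}(φ) - 1)/U_k(φ)`. -/
noncomputable def gam (k : ℕ) (x t : ℝ) : ℝ :=
  (k : ℝ) / (1 - 3 * x * (t - 1)) -
    2 * x * (t - 1) / (1 - 3 * x * (t - 1)) ^ 2 *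
      ((chebU (k : ℤ) (phi x t) - chebU ((k : ℤ) - 1) (phi x t) - 1) / chebU (k : ℤ) (phi x t))

/-!
A word is a walk on its alphabet, and `t ^ s(w)` is the product of its step weights, collected in
the transfer matrix `W = J + (t - 1) A`, where `J` is the all-ones matrix and `A` the tridiagonal
matrix of ones. Hence `F_k = 1 + x ∑ₙ 1ᵀ Wⁿ 1 xⁿ`.

Put `y = x (t - 1)`. Since `1 - x W` and `1 - y A` differ by the rank-one matrix `x J`, a solution
of `(1 - y A) u = 1` satisfies `(1 - x W) u = (1 - x γ) 1` with `γ = 1ᵀ u`. The Neumann series of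
`1 - x W` therefore gives `∑ₙ 1ᵀ Wⁿ 1 xⁿ = γ / (1 - x γ)`, that is, `F_k = 1 / (1 - x γ)`.
The Chebyshev recurrence at `φ = (1 - y) / (2 y)` is the homogeneous equation `(1 - y A) u = 0`
away from the boundary, so `u` is a constant corrected by Chebyshev values.
-/

open Matrix Topology

section WeightedWords

variable {ι R : Type*} [CommSemiring R]

/-- The weight of a nonempty word `w` for a matrix `W` of step weights: the product of
`W a b` over all pairs of consecutive letters `a`, `b`. Indexing by `Fin (n + 1)` makes the
exponent of `W` in the transfer-matrix identity equal to the number `n` of steps. -/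
def wordWeight (W : Matrix ι ι R) {n : ℕ} (w : Fin (n + 1) → ι) : R :=
  ∏ i : Fin n, W (w i.castSucc) (w i.succ)

lemma wordWeight_cons (W : Matrix ι ι R) {n : ℕ} (a : ι) (w : Fin (n + 1) → ι) :
    wordWeight W (Fin.cons a w : Fin (n + 2) → ι) = W a (w 0) * wordWeight W w := by
  simp only [wordWeight, Fin.prod_univ_succ, Fin.castSucc_zero, Fin.cons_zero, Fin.cons_succ,
    ← Fin.succ_castSucc]

variable [Fintype ι]

lemma sum_words_eq_sum_cons {M : Type*} [AddCommMonoid M] {n : ℕ} (f : (Fin (n + 1) → ι) → M) :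
    ∑ w, f w = ∑ a, ∑ w : Fin n → ι, f (Fin.cons a w) := by
  rw [← Fintype.sum_prod_type', ← (Fin.consEquiv fun _ ↦ ι).sum_comp]
  rfl

variable [DecidableEq ι]

lemma sum_wordWeight_cons (W : Matrix ι ι R) (n : ℕ) (a : ι) :
    ∑ w : Fin n → ι, wordWeight W (Fin.cons a w : Fin (n + 1) → ι) = (W ^ n *ᵥ 1) a := by
  induction n generalizing a with
  | zero => simp [wordWeight]
  | succ n ih =>
    simp only [sum_words_eq_sum_cons, wordWeight_cons, Fin.cons_zero, ← Finset.mul_sum, ih]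
    rw [pow_succ', ← mulVec_mulVec]
    rfl

lemma sum_wordWeight (W : Matrix ι ι R) (n : ℕ) :
    ∑ w : Fin (n + 1) → ι, wordWeight W w = 1 ⬝ᵥ W ^ n *ᵥ 1 := by
  simp only [sum_words_eq_sum_cons, sum_wordWeight_cons, one_dotProduct]

end WeightedWords

section NeumannSeries

variable {ι 𝕜 : Type*} [Fintype ι] [NormedField 𝕜] [CompleteSpace 𝕜]

lemma eventually_hasSum_pow_smul [DecidableEq ι] (W : Matrix ι ι 𝕜) :
    ∀ᶠ x in 𝓝 (0 : 𝕜), IsUnit (1 - x • W) ∧ HasSum (fun n ↦ (x • W) ^ n) (1 - x • W)⁻¹ := by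
  open scoped Matrix.Norms.Operator in
  have h_small : ∀ᶠ x in 𝓝 (0 : 𝕜), ‖x • W‖ < 1 :=
    ContinuousAt.eventually_lt (by fun_prop) continuousAt_const (by simp)
  -- The uniformity of the operator norm is the entrywise one, but instance search does not see it.
  have : @CompleteSpace (Matrix ι ι 𝕜) PseudoMetricSpace.toUniformSpace :=
    inferInstanceAs (CompleteSpace (ι → ι → 𝕜))
  filter_upwards [h_small] with x hx
  have h_inverse : (∑' n, (x • W) ^ n) * (1 - x • W) = 1 := geom_series_mul_neg _ hx
  refine ⟨.of_mul_eq_one_right _ h_inverse, ?_⟩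
  rw [inv_eq_left_inv h_inverse]
  exact (summable_geometric_of_norm_lt_one hx).hasSum

lemma eventually_hasSum_dotProduct_pow_mulVec [DecidableEq ι] (W : Matrix ι ι 𝕜) :
    ∀ᶠ x in 𝓝 (0 : 𝕜), ∀ a b u : ι → 𝕜, u - x • W *ᵥ u = b →
      HasSum (fun n ↦ a ⬝ᵥ W ^ n *ᵥ b * x ^ n) (a ⬝ᵥ u) := by
  filter_upwards [eventually_hasSum_pow_smul W] with x ⟨h_unit, h_neumann⟩ a b u hu
  have h_factor : b = (1 - x • W) *ᵥ u := by rw [sub_mulVec, one_mulVec, smul_mulVec, hu]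
  have h_solution : (1 - x • W)⁻¹ *ᵥ b = u := by
    rw [h_factor, mulVec_mulVec, nonsing_inv_mul _ ((isUnit_iff_isUnit_det _).1 h_unit),
      one_mulVec]
  let evaluation : Matrix ι ι 𝕜 →+ 𝕜 :=
    { toFun := fun N ↦ a ⬝ᵥ N *ᵥ b
      map_zero' := by simp
      map_add' := by simp [add_mulVec] }
  have h_cont : Continuous evaluation :=
    continuous_const.dotProduct (continuous_id.matrix_mulVec continuous_const)
  have h_limit : evaluation (1 - x • W)⁻¹ = a ⬝ᵥ u := congrArg (a ⬝ᵥ ·) h_solution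
  have h_term (n : ℕ) : evaluation ((x • W) ^ n) = a ⬝ᵥ W ^ n *ᵥ b * x ^ n := by
    change a ⬝ᵥ (x • W) ^ n *ᵥ b = _
    rw [smul_pow, smul_mulVec, dotProduct_smul, smul_eq_mul, mul_comm]
  simpa only [← h_limit, ← h_term, Function.comp_def] using h_neumann.map evaluation h_cont

lemma eventually_hasSum_sum_wordWeight (W : Matrix ι ι 𝕜) :
    ∀ᶠ x in 𝓝 (0 : 𝕜), ∀ (c : 𝕜) (u : ι → 𝕜), u - x • W *ᵥ u = (fun _ ↦ c) →
      HasSum (fun n ↦ c * ((∑ w : Fin (n + 1) → ι, wordWeight W w) * x ^ n)) (∑ i, u i) := by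
  classical
  filter_upwards [eventually_hasSum_dotProduct_pow_mulVec W] with x hx c u hu
  have h_const : (fun _ : ι ↦ c) = c • 1 := by ext; simp
  have h := hx 1 _ u (hu.trans h_const)
  simpa only [sum_wordWeight, mulVec_smul, dotProduct_smul, smul_eq_mul, mul_assoc, one_dotProduct]
    using h

end NeumannSeries

section StaircaseMatrix

/-- The transfer matrix of the statistic `statS`: a step between letters at distance at most one
has weight `t`, every other step has weight `1`. -/
def staircaseMatrix {R : Type*} [One R] (k : ℕ) (t : R) : Matrix (Fin k) (Fin k) R :=
  of fun i j ↦ if |((j : ℕ) : ℤ) - ((i : ℕ) : ℤ)| ≤ 1 then t else 1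

lemma pow_statS_eq_wordWeight {R : Type*} [CommSemiring R] {k n : ℕ} (t : R)
    (w : Fin (n + 1) → Fin k) : t ^ statS w = wordWeight (staircaseMatrix k t) w := by
  simp only [wordWeight, staircaseMatrix, of_apply, Finset.prod_ite, Finset.prod_const, one_pow,
    mul_one]
  rfl

lemma sum_fin_abs_sub_le_one {M : Type*} [AddCommMonoid M] {k : ℕ} (f : ℤ → M)
    (h_left : f (-1) = 0) (h_right : f k = 0) (i : Fin k) :
    ∑ j : Fin k, (if |((j : ℕ) : ℤ) - ((i : ℕ) : ℤ)| ≤ 1 then f (j : ℕ) else 0)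
      = f ((i : ℕ) - 1) + f (i : ℕ) + f ((i : ℕ) + 1) := by
  have h_neighbours : ∑ m ∈ ({(i : ℤ) - 1, (i : ℤ), (i : ℤ) + 1} : Finset ℤ), f m
      = f ((i : ℕ) - 1) + f (i : ℕ) + f ((i : ℕ) + 1) := by
    rw [Finset.sum_insert (by grind), Finset.sum_pair (by grind), add_assoc]
  rw [← h_neighbours, ← Finset.sum_filter]
  refine Finset.sum_of_injOn (fun j : Fin k ↦ ((j : ℕ) : ℤ)) ?_ ?_ ?_ fun _ _ ↦ rfl
  · intro a _ b _ hab
    simpa [Fin.ext_iff] using hab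
  · intro j hj
    simp only [Finset.coe_filter, Finset.mem_univ, true_and, Set.mem_ofPred_eq, abs_le] at hj
    simp only [Finset.coe_insert, Finset.coe_singleton, Set.mem_insert_iff, Set.mem_singleton_iff]
    omega
  · intro m hm h_notMem
    have h_boundary : m = -1 ∨ m = k := by
      by_contra! h
      simp only [Finset.mem_insert, Finset.mem_singleton] at hm
      refine h_notMem ⟨⟨m.toNat, by omega⟩, ?_, ?_⟩
      · simp only [Finset.coe_filter, Finset.mem_univ, true_and, Set.mem_ofPred_eq, abs_le]
        omega
      · simp only
        omega
    rcases h_boundary with rfl | rfl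
    exacts [h_left, h_right]

lemma staircaseMatrix_mulVec_apply {R : Type*} [CommRing R] {k : ℕ} (t : R) (f : ℤ → R)
    (h_left : f (-1) = 0) (h_right : f k = 0) (i : Fin k) :
    (staircaseMatrix k t *ᵥ fun j ↦ f (j : ℕ)) i
      = ∑ j : Fin k, f (j : ℕ) + (t - 1) * (f ((i : ℕ) - 1) + f (i : ℕ) + f ((i : ℕ) + 1)) := by
  rw [← sum_fin_abs_sub_le_one f h_left h_right, Finset.mul_sum, ← Finset.sum_add_distrib]
  simp only [mulVec, dotProduct, staircaseMatrix, of_apply]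
  refine Finset.sum_congr rfl fun j _ ↦ ?_
  split_ifs <;> ring

end StaircaseMatrix

section ChebyshevSolution

open Polynomial Polynomial.Chebyshev

lemma eval_U_add_one_add_eval_U_sub_one {R : Type*} [CommRing R] (n : ℤ) (p : R) :
    (U R (n + 1)).eval p + (U R (n - 1)).eval p = 2 * p * (U R n).eval p := by
  simp [U_add_one]

lemma two_mul_sub_two_mul_sum_eval_U {R : Type*} [CommRing R] (k : ℕ) (p : R) :
    (2 * p - 2) * ∑ i : Fin k, (U R (i : ℕ)).eval p
      = (U R k).eval p - (U R (k - 1)).eval p - 1 := by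
  rw [Fin.sum_univ_eq_sum_range (fun i ↦ (U R i).eval p)]
  induction k with
  | zero => simp
  | succ n ih =>
    have h_rec := eval_U_add_one_add_eval_U_sub_one (n : ℤ) p
    rw [Finset.sum_range_succ, mul_add, ih]
    push_cast
    rw [add_sub_cancel_right]
    linear_combination -h_rec

lemma sum_eval_U_reflect (R : Type*) [CommRing R] (k : ℕ) (p : R) :
    ∑ i : Fin k, (U R (k - 1 - (i : ℕ))).eval p = ∑ i : Fin k, (U R (i : ℕ)).eval p := by
  rw [← Equiv.sum_comp Fin.revPerm]
  refine Finset.sum_congr rfl fun i _ ↦ ?_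
  congr 2
  rw [Fin.revPerm_apply, Fin.val_rev]
  omega

variable {K : Type*} [Field K] {y p : K}

/-- The solution of the tridiagonal system `u i - y * (u (i - 1) + u i + u (i + 1)) = 1`,
`0 ≤ i < k`, with boundary values `u (-1) = u k = 0`, where `p = (1 - y) / (2 * y)`: the constant
solution `1 / (1 - 3 * y)` of the recurrence, corrected at the boundary by the homogeneous solutions
`U i` and `U (k - 1 - i)`. The index is an integer so that the boundary values are included. -/
noncomputable def staircaseSolution (k : ℕ) (y p : K) (i : ℤ) : K :=
  (1 - ((U K i).eval p + (U K (k - 1 - i)).eval p) / (U K k).eval p) / (1 - 3 * y)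

lemma staircaseSolution_neg_one (k : ℕ) (y : K) (hU : (U K k).eval p ≠ 0) :
    staircaseSolution k y p (-1) = 0 := by
  simp [staircaseSolution, hU]

lemma staircaseSolution_self (k : ℕ) (y : K) (hU : (U K k).eval p ≠ 0) :
    staircaseSolution k y p k = 0 := by
  simp [staircaseSolution, hU]

lemma staircaseSolution_recurrence (k : ℕ) (hy : y * (2 * p + 1) = 1) (h3 : 1 - 3 * y ≠ 0) (i : ℤ) :
    staircaseSolution k y p i - y * (staircaseSolution k y p (i - 1) + staircaseSolution k y p i
      + staircaseSolution k y p (i + 1)) = 1 := by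
  have h_rec := eval_U_add_one_add_eval_U_sub_one i p
  have h_rec_reflect := eval_U_add_one_add_eval_U_sub_one (k - 1 - i) p
  simp only [staircaseSolution, show (k : ℤ) - 1 - (i - 1) = k - 1 - i + 1 by ring,
    show (k : ℤ) - 1 - (i + 1) = k - 1 - i - 1 by ring, div_eq_mul_inv _ ((U K k).eval p)]
  field_simp
  linear_combination (y * ((U K k).eval p)⁻¹) * (h_rec + h_rec_reflect)
    + (((U K k).eval p)⁻¹ * ((U K i).eval p + (U K (k - 1 - i)).eval p)) * hy

lemma sum_staircaseSolution (k : ℕ) (hy : y * (2 * p + 1) = 1) (h3 : 1 - 3 * y ≠ 0) :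
    ∑ i : Fin k, staircaseSolution k y p (i : ℕ)
      = k / (1 - 3 * y) - 2 * y / (1 - 3 * y) ^ 2
        * (((U K k).eval p - (U K (k - 1)).eval p - 1) / (U K k).eval p) := by
  simp only [staircaseSolution]
  rw [← Finset.sum_div, Finset.sum_sub_distrib, ← Finset.sum_div, Finset.sum_add_distrib,
    sum_eval_U_reflect, ← two_mul_sub_two_mul_sum_eval_U, Finset.sum_const, Finset.card_univ,
    Fintype.card_fin, nsmul_one, div_eq_mul_inv _ ((U K k).eval p),
    div_eq_mul_inv _ ((U K k).eval p)]
  generalize ∑ i : Fin k, (U K (i : ℕ)).eval p = S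
  field_simp
  linear_combination (2 * S * ((U K k).eval p)⁻¹) * hy

lemma staircaseSolution_sub_smul_mulVec (k : ℕ) {x t : K} (hp : x * (t - 1) * (2 * p + 1) = 1)
    (h3 : 1 - 3 * (x * (t - 1)) ≠ 0) (hU : (U K k).eval p ≠ 0) :
    (fun i : Fin k ↦ staircaseSolution k (x * (t - 1)) p (i : ℕ))
      - x • staircaseMatrix k t *ᵥ (fun i ↦ staircaseSolution k (x * (t - 1)) p (i : ℕ))
      = fun _ ↦ 1 - x * ∑ i : Fin k, staircaseSolution k (x * (t - 1)) p (i : ℕ) := by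
  ext i
  rw [Pi.sub_apply, Pi.smul_apply, smul_eq_mul, staircaseMatrix_mulVec_apply t _
    (staircaseSolution_neg_one k _ hU) (staircaseSolution_self k _ hU)]
  linear_combination staircaseSolution_recurrence k hp h3 (i : ℕ)

end ChebyshevSolution

lemma mul_two_mul_phi_add_one {x t : ℝ} (hxt : x * (t - 1) ≠ 0) :
    x * (t - 1) * (2 * phi x t + 1) = 1 := by
  rw [phi, mul_assoc 2 x]
  generalize x * (t - 1) = y at *
  field_simp
  ring

lemma sum_staircaseSolution_phi (k : ℕ) {x t : ℝ} (hxt : x * (t - 1) ≠ 0)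
    (h3 : 1 - 3 * (x * (t - 1)) ≠ 0) :
    ∑ i : Fin k, staircaseSolution k (x * (t - 1)) (phi x t) (i : ℕ) = gam k x t := by
  simp only [sum_staircaseSolution k (mul_two_mul_phi_add_one hxt) h3, gam, chebU, mul_assoc]

/-- The two-variable generating function `F_k(x,t) = Σ_{n≥0} (Σ_{w∈[k]^n} t^{s(w)}) x^n`
satisfies `F_k(x,t) = 1/(1 - x·γ(x,t))`, as an identity of formal series, i.e. for all
(sufficiently small) `x` at which the right-hand side is defined. -/
theorem gf_of_staircase_statistic (k : ℕ) (hk : 2 ≤ k) (t : ℝ) :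
    ∃ ε > 0, ∀ x : ℝ, |x| < ε →
      x * (t - 1) ≠ 0 →
      1 - 3 * x * (t - 1) ≠ 0 →
      chebU (k : ℤ) (phi x t) ≠ 0 →
      1 - x * gam k x t ≠ 0 →
      ∑' n : ℕ, (∑ w : Fin n → Fin k, t ^ statS w) * x ^ n = 1 / (1 - x * gam k x t) := by
  obtain ⟨ε, hε, h_words⟩ :=
    Metric.eventually_nhds_iff.1 (eventually_hasSum_sum_wordWeight (staircaseMatrix k t))
  refine ⟨ε, hε, fun x hx hxt h3 hU hγ ↦ ?_⟩
  rw [mul_assoc] at h3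
  have h_solution := staircaseSolution_sub_smul_mulVec k (mul_two_mul_phi_add_one hxt) h3 hU
  have h_nonempty : HasSum (fun n ↦ (∑ w : Fin (n + 1) → Fin k, t ^ statS w) * x ^ n)
      (gam k x t / (1 - x * gam k x t)) := by
    have h_scaled := h_words (by simpa using hx) _ _ h_solution
    simp only [sum_staircaseSolution_phi k hxt h3, ← pow_statS_eq_wordWeight] at h_scaled
    simpa only [mul_div_cancel_left₀ _ hγ] using h_scaled.div_const (1 - x * gam k x t)
  have h_all : HasSum (fun n ↦ (∑ w : Fin n → Fin k, t ^ statS w) * x ^ n)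
      (x * (gam k x t / (1 - x * gam k x t)) + 1) := by
    have h_empty : (∑ w : Fin 0 → Fin k, t ^ statS w) * x ^ 0 = 1 := by simp [statS]
    rw [← hasSum_nat_add_iff' 1]
    simpa only [Finset.sum_range_one, h_empty, add_sub_cancel_right, pow_succ', mul_left_comm]
      using h_nonempty.mul_left x
  rw [h_all.tsum_eq]
  field_simp
  ring
end

section
/- Let k ≥ 2 be an integer and let D_k(x) = 1 + Σ_{n≥1} (number of staircase words in [k]^n) x^n be the generating function of staircase words over k. Then D_k(x) = 1 + x(k - (3k+2)x)/(1-3x)² + (2x²/(1-3x)²)·(U_{k-1}((1-x)/(2x)) + 1)/U_k((1-x)/(2x)), valid wherever the right-hand side is defined (x ≠ 0, x ≠ 1/3, U_k((1-x)/(2x)) ≠ 0). -/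
/-- A word `w ∈ [k]^n` (encoded as `Fin n → Fin k`) is a staircase word if
`|w_{i+1} - w_i| ≤ 1` for every `1 ≤ i ≤ n-1`. -/
def IsStaircase {k n : ℕ} (w : Fin n → Fin k) : Prop :=
  ∀ i : Fin (n - 1),
    |((w ⟨(i : ℕ) + 1, by have := i.isLt; omega⟩ : ℕ) : ℤ) -
      ((w ⟨(i : ℕ), by have := i.isLt; omega⟩ : ℕ) : ℤ)| ≤ 1

/-!
Let `G_j(x)` count the staircase words that start with the letter `j`, a word of length `n + 1`
having weight `x ^ n`. Deleting the first letter gives `G_j = 1 + x (G_{j-1} + G_j + G_{j+1})` for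
`1 ≤ j ≤ k`, with `G_0 = G_{k+1} = 0`. Subtracting the constant solution `c = 1 / (1 - 3x)` leaves
the homogeneous recurrence `y_{j+1} = 2t y_j - y_{j-1}` with `t = (1 - x) / (2x)`. The polynomials
`U_m` satisfy the same recurrence, so the boundary values `y_0 = y_{k+1} = -c` determine
`y_1 = y_k = -c (U_{k-1}(t) + 1) / U_k(t)`. Finally, summing the equations for the `G_j` over `j`
expresses `(1 - 3x) ∑ G_j` through `G_1` and `G_k` alone.
-/

open Polynomial.Chebyshev (U)

section Counting

variable {k n : ℕ}

theorem isStaircase_cons (a : Fin k) (w : Fin (n + 1) → Fin k) :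
    IsStaircase (Fin.cons a w : Fin (n + 2) → Fin k) ↔
      |((w 0 : ℕ) : ℤ) - (a : ℕ)| ≤ 1 ∧ IsStaircase w :=
  Fin.forall_fin_succ

/-- The staircase words of length `n + 1` over `k` whose first letter is `j`. Letters are numbered
from `1` as in `[k]`, so the set is empty for `j = 0` and for `j = k + 1`. -/
def staircaseWordsFrom (k n j : ℕ) : Set (Fin (n + 1) → Fin k) :=
  {w | IsStaircase w ∧ (w 0 : ℕ) + 1 = j}

theorem staircaseWordsFrom_eq_empty {j : ℕ} (hj : ∀ a : Fin k, (a : ℕ) + 1 ≠ j) :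
    staircaseWordsFrom k n j = ∅ :=
  Set.eq_empty_of_forall_notMem fun w hw => hj (w 0) hw.2

theorem disjoint_staircaseWordsFrom {i j : ℕ} (hij : i ≠ j) :
    Disjoint (staircaseWordsFrom k n i) (staircaseWordsFrom k n j) :=
  Set.disjoint_left.2 fun _ hi hj => hij (hi.2.symm.trans hj.2)

theorem staircaseWordsFrom_length_one (j : Fin k) :
    staircaseWordsFrom k 0 (j + 1) = {fun _ => j} := by
  ext w
  have : IsStaircase w := fun i : Fin 0 => i.elim0
  simp [staircaseWordsFrom, this, funext_iff, Fin.val_inj]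

theorem staircaseWordsFrom_succ (j : Fin k) :
    staircaseWordsFrom k (n + 1) (j + 1) =
      Fin.cons j '' (staircaseWordsFrom k n j ∪ staircaseWordsFrom k n (j + 1) ∪
        staircaseWordsFrom k n (j + 2)) := by
  ext v
  obtain ⟨a, w, rfl⟩ : ∃ a w, v = Fin.cons a w := ⟨v 0, Fin.tail v, (Fin.cons_self_tail v).symm⟩
  have near : |((w 0 : ℕ) : ℤ) - (j : ℕ)| ≤ 1 ↔
      (w 0 : ℕ) + 1 = j ∨ (w 0 : ℕ) + 1 = j + 1 ∨ (w 0 : ℕ) + 1 = j + 2 := by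
    rw [abs_le]
    omega
  constructor
  · rintro ⟨hw, ha⟩
    obtain rfl : a = j := Fin.val_injective (Nat.succ_injective ha)
    obtain ⟨hstep, hw⟩ := (isStaircase_cons a w).1 hw
    refine ⟨w, ?_, rfl⟩
    rcases near.1 hstep with h | h | h
    exacts [.inl (.inl ⟨hw, h⟩), .inl (.inr ⟨hw, h⟩), .inr ⟨hw, h⟩]
  · rintro ⟨w', hw', h⟩
    obtain ⟨rfl, rfl⟩ := Fin.cons_injective2 h
    refine ⟨(isStaircase_cons j w').2 ?_, rfl⟩
    rcases hw' with (⟨hw, h⟩ | ⟨hw, h⟩) | ⟨hw, h⟩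
    exacts [⟨near.2 (.inl h), hw⟩, ⟨near.2 (.inr (.inl h)), hw⟩, ⟨near.2 (.inr (.inr h)), hw⟩]

theorem ncard_staircaseWordsFrom_succ (j : Fin k) :
    (staircaseWordsFrom k (n + 1) (j + 1)).ncard =
      (staircaseWordsFrom k n j).ncard + (staircaseWordsFrom k n (j + 1)).ncard +
        (staircaseWordsFrom k n (j + 2)).ncard := by
  rw [staircaseWordsFrom_succ, Set.ncard_image_of_injective _ (Fin.cons_right_injective _),
    Set.ncard_union_eq, Set.ncard_union_eq]
  · exact disjoint_staircaseWordsFrom (by omega)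
  · exact Set.disjoint_union_left.2
      ⟨disjoint_staircaseWordsFrom (by omega), disjoint_staircaseWordsFrom (by omega)⟩

theorem ncard_staircaseWordsFrom_le (k n j : ℕ) : (staircaseWordsFrom k n j).ncard ≤ 3 ^ n := by
  induction n generalizing j with
  | zero =>
    refine (Set.ncard_le_one_iff (Set.toFinite _)).2 fun {v w} hv hw => funext fun i => ?_
    rw [Fin.fin_one_eq_zero i]
    exact Fin.val_injective (Nat.succ_injective (hv.2.trans hw.2.symm))
  | succ n ih =>
    by_cases hj : ∃ i : Fin k, (i : ℕ) + 1 = j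
    · obtain ⟨i, rfl⟩ := hj
      rw [ncard_staircaseWordsFrom_succ]
      have := ih i
      have := ih (i + 1)
      have := ih (i + 2)
      omega
    · simp [staircaseWordsFrom_eq_empty fun i hi => hj ⟨i, hi⟩]

theorem card_isStaircase (k n : ℕ) :
    Nat.card {w : Fin (n + 1) → Fin k | IsStaircase w} =
      ∑ j ∈ Finset.range k, (staircaseWordsFrom k n (j + 1)).ncard := by
  have partition : {w : Fin (n + 1) → Fin k | IsStaircase w} =
      ⋃ j : Fin k, staircaseWordsFrom k n (j + 1) := by
    ext w
    simp [staircaseWordsFrom, Fin.val_inj]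
  rw [partition, Nat.card_coe_set_eq, Set.ncard_iUnion_of_finite (fun _ => Set.toFinite _)
    fun i j hij => disjoint_staircaseWordsFrom (by simpa [Fin.val_inj] using hij),
    finsum_eq_sum_of_fintype,
    Fin.sum_univ_eq_sum_range (fun j => (staircaseWordsFrom k n (j + 1)).ncard)]

end Counting

section GeneratingFunction

variable {𝕜 : Type*} [NormedField 𝕜]

/-- The generating function `G_j(x) = ∑ₙ #(staircase words of length n + 1 starting with j) xⁿ`.
The exponent is the number of steps of the word rather than its length. -/
noncomputable def staircaseGF (k j : ℕ) (x : 𝕜) : 𝕜 :=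
  ∑' n : ℕ, ((staircaseWordsFrom k n j).ncard : 𝕜) * x ^ n

theorem staircaseGF_eq_zero {k j : ℕ} (hj : ∀ a : Fin k, (a : ℕ) + 1 ≠ j) (x : 𝕜) :
    staircaseGF k j x = 0 := by
  simp [staircaseGF, staircaseWordsFrom_eq_empty hj]

variable [CompleteSpace 𝕜] {x : 𝕜}

theorem summable_ncard_staircaseWordsFrom (k j : ℕ) (hx : ‖x‖ < 1 / 3) :
    Summable fun n => ((staircaseWordsFrom k n j).ncard : 𝕜) * x ^ n := by
  refine .of_norm_bounded (g := fun n => (3 * ‖x‖) ^ n)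
    (summable_geometric_of_lt_one (by positivity) (by linarith)) fun n => ?_
  calc ‖((staircaseWordsFrom k n j).ncard : 𝕜) * x ^ n‖
      ≤ (staircaseWordsFrom k n j).ncard * ‖x‖ ^ n := by
        rw [norm_mul, norm_pow]
        gcongr
        simpa using Nat.norm_cast_le (α := 𝕜) (staircaseWordsFrom k n j).ncard
    _ ≤ 3 ^ n * ‖x‖ ^ n := by
        gcongr
        exact_mod_cast ncard_staircaseWordsFrom_le k n j
    _ = (3 * ‖x‖) ^ n := (mul_pow _ _ _).symm

theorem staircaseGF_succ {k j : ℕ} (hj : j < k) (hx : ‖x‖ < 1 / 3) :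
    staircaseGF k (j + 1) x =
      1 + x * (staircaseGF k j x + staircaseGF k (j + 1) x + staircaseGF k (j + 2) x) := by
  have hs := fun i => summable_ncard_staircaseWordsFrom k i hx
  have first : (staircaseWordsFrom k 0 (j + 1)).ncard = 1 := by
    rw [staircaseWordsFrom_length_one ⟨j, hj⟩, Set.ncard_singleton]
  have step (n : ℕ) := ncard_staircaseWordsFrom_succ (n := n) ⟨j, hj⟩
  conv_lhs => rw [staircaseGF, (hs _).tsum_eq_zero_add, first, Nat.cast_one, pow_zero, one_mul]
  simp only [staircaseGF]
  rw [← (hs _).tsum_add (hs _), ← ((hs _).add (hs _)).tsum_add (hs _), ← tsum_mul_left]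
  congr 1
  refine tsum_congr fun n => ?_
  rw [step]
  push_cast
  ring

theorem tsum_card_isStaircase (k : ℕ) (hx : ‖x‖ < 1 / 3) :
    ∑' n : ℕ, (Nat.card {w : Fin (n + 1) → Fin k | IsStaircase w} : 𝕜) * x ^ (n + 1) =
      x * ∑ j ∈ Finset.range k, staircaseGF k (j + 1) x := by
  simp only [staircaseGF]
  rw [← Summable.tsum_finsetSum fun j _ => summable_ncard_staircaseWordsFrom k (j + 1) hx,
    ← tsum_mul_left]
  refine tsum_congr fun n => ?_
  rw [card_isStaircase, ← Finset.sum_mul]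
  push_cast
  ring

end GeneratingFunction

section ChebyshevRecurrence

variable {R : Type*} [CommRing R] {k : ℕ} {t : R} {y : ℕ → R}

theorem eq_eval_U_of_recurrence (hy : ∀ j < k, y (j + 2) = 2 * t * y (j + 1) - y j) :
    y (k + 1) = (U R k).eval t * y 1 - (U R (k - 1)).eval t * y 0 := by
  induction k using Nat.twoStepInduction with
  | zero => simp
  | one => simp [hy 0 one_pos]
  | more m ih₀ ih₁ =>
    have hU₁ := Polynomial.Chebyshev.U_add_one R m
    have hU₂ := Polynomial.Chebyshev.U_add_two R m
    rw [hy (m + 1) (by omega), ih₀ fun j hj => hy j (by omega), ih₁ fun j hj => hy j (by omega)]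
    push_cast
    rw [show (m : ℤ) + 2 - 1 = m + 1 by ring, show (m : ℤ) + 1 - 1 = m by ring, hU₂, hU₁]
    simp only [Polynomial.eval_sub, Polynomial.eval_mul, Polynomial.eval_X, Polynomial.eval_ofNat]
    ring

theorem reverse_recurrence (hy : ∀ j < k, y (j + 2) = 2 * t * y (j + 1) - y j) :
    ∀ j < k, y (k + 1 - (j + 2)) = 2 * t * y (k + 1 - (j + 1)) - y (k + 1 - j) := by
  intro j hj
  obtain ⟨i, rfl⟩ := Nat.exists_eq_add_of_lt hj
  have := hy i (by omega)
  rw [show j + i + 1 + 1 - (j + 2) = i by omega, show j + i + 1 + 1 - (j + 1) = i + 1 by omega,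
    show j + i + 1 + 1 - j = i + 2 by omega, this]
  ring

theorem eval_U_mul_of_recurrence_of_boundary {b : R}
    (hy : ∀ j < k, y (j + 2) = 2 * t * y (j + 1) - y j) (h₀ : y 0 = b) (h₁ : y (k + 1) = b) :
    (U R k).eval t * y 1 = b * ((U R (k - 1)).eval t + 1) ∧
      (U R k).eval t * y k = b * ((U R (k - 1)).eval t + 1) := by
  have forward := eq_eval_U_of_recurrence hy
  have backward := eq_eval_U_of_recurrence (y := fun j => y (k + 1 - j)) (reverse_recurrence hy)
  simp only [Nat.sub_self, Nat.add_sub_cancel, Nat.sub_zero, h₀, h₁] at forward backward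
  constructor
  · linear_combination -forward
  · linear_combination -backward

end ChebyshevRecurrence

section NeighborSystem

theorem sum_range_of_neighbor_recurrence {R : Type*} [CommRing R] {k : ℕ} {x : R} {g : ℕ → R}
    (hg : ∀ j < k, g (j + 1) = 1 + x * (g j + g (j + 1) + g (j + 2))) :
    (1 - 3 * x) * ∑ j ∈ Finset.range k, g (j + 1) =
      k + x * (g 0 - g 1) + x * (g (k + 1) - g k) := by
  induction k with
  | zero =>
    rw [Finset.sum_range_zero]
    push_cast
    ring
  | succ m ih =>
    rw [Finset.sum_range_succ, mul_add, ih fun j hj => hg j (by omega)]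
    push_cast
    linear_combination hg m (by omega)

variable {K : Type*} [Field K] {k : ℕ} {x t : K} {g : ℕ → K}

theorem sub_const_recurrence (h3x : 1 - 3 * x ≠ 0) (ht : 2 * t * x = 1 - x)
    (hg : ∀ j < k, g (j + 1) = 1 + x * (g j + g (j + 1) + g (j + 2))) :
    ∀ j < k, g (j + 2) - 1 / (1 - 3 * x) =
      2 * t * (g (j + 1) - 1 / (1 - 3 * x)) - (g j - 1 / (1 - 3 * x)) := by
  intro j hj
  have hx : x ≠ 0 := by
    rintro rfl
    simp at ht
  have hc : 1 / (1 - 3 * x) * (1 - 3 * x) = 1 := one_div_mul_cancel h3x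
  apply mul_left_cancel₀ hx
  linear_combination -hg j hj - (g (j + 1) - 1 / (1 - 3 * x)) * ht + hc

theorem endpoints_of_neighbor_recurrence (h3x : 1 - 3 * x ≠ 0)
    (ht : 2 * t * x = 1 - x) (hU : (U K k).eval t ≠ 0)
    (hg : ∀ j < k, g (j + 1) = 1 + x * (g j + g (j + 1) + g (j + 2)))
    (h₀ : g 0 = 0) (h₁ : g (k + 1) = 0) :
    (1 - 3 * x) * g 1 = 1 - ((U K (k - 1)).eval t + 1) / (U K k).eval t ∧
      (1 - 3 * x) * g k = 1 - ((U K (k - 1)).eval t + 1) / (U K k).eval t := by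
  obtain ⟨hleft, hright⟩ := eval_U_mul_of_recurrence_of_boundary
    (y := fun j => g j - 1 / (1 - 3 * x)) (b := -(1 / (1 - 3 * x)))
    (sub_const_recurrence h3x ht hg) (by rw [h₀, zero_sub]) (by rw [h₁, zero_sub])
  field_simp at hleft hright ⊢
  exact ⟨by linear_combination hleft, by linear_combination hright⟩

theorem mul_sum_range_of_neighbor_recurrence (h3x : 1 - 3 * x ≠ 0) (ht : 2 * t * x = 1 - x)
    (hU : (U K k).eval t ≠ 0)
    (hg : ∀ j < k, g (j + 1) = 1 + x * (g j + g (j + 1) + g (j + 2)))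
    (h₀ : g 0 = 0) (h₁ : g (k + 1) = 0) :
    x * ∑ j ∈ Finset.range k, g (j + 1) =
      x * (k - (3 * k + 2) * x) / (1 - 3 * x) ^ 2 +
        2 * x ^ 2 / (1 - 3 * x) ^ 2 * (((U K (k - 1)).eval t + 1) / (U K k).eval t) := by
  obtain ⟨hfirst, hlast⟩ := endpoints_of_neighbor_recurrence h3x ht hU hg h₀ h₁
  have hsum := sum_range_of_neighbor_recurrence hg
  rw [h₀, h₁] at hsum
  rw [div_mul_eq_mul_div, ← add_div, eq_div_iff (pow_ne_zero 2 h3x)]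
  linear_combination x * (1 - 3 * x) * hsum - x ^ 2 * (hfirst + hlast)

end NeighborSystem

/-- The generating function `D_k(x) = 1 + Σ_{n≥1} (#staircase words in [k]^n) xⁿ` of staircase
words over `k` equals
`1 + x(k - (3k+2)x)/(1-3x)² + (2x²/(1-3x)²)·(U_{k-1}((1-x)/(2x)) + 1)/U_k((1-x)/(2x))`,
wherever the right-hand side is defined (for sufficiently small `x`). -/
theorem gf_of_staircase_words (k : ℕ) (hk : 2 ≤ k) :
    ∃ ε > 0, ∀ x : ℝ, |x| < ε →
      x ≠ 0 →
      x ≠ 1 / 3 →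
      chebU (k : ℤ) ((1 - x) / (2 * x)) ≠ 0 →
      1 + ∑' n : ℕ, (Nat.card {w : Fin (n + 1) → Fin k | IsStaircase w} : ℝ) * x ^ (n + 1) =
        1 + x * (k - (3 * k + 2) * x) / (1 - 3 * x) ^ 2 +
          2 * x ^ 2 / (1 - 3 * x) ^ 2 *
            ((chebU ((k : ℤ) - 1) ((1 - x) / (2 * x)) + 1) /
              chebU (k : ℤ) ((1 - x) / (2 * x))) := by
  refine ⟨1 / 3, by norm_num, fun x hx hx₀ hx₃ hU => ?_⟩
  have h3x : 1 - 3 * x ≠ 0 := fun h => hx₃ (by linarith)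
  have ht : 2 * ((1 - x) / (2 * x)) * x = 1 - x := by field_simp
  have hrec (j : ℕ) (hj : j < k) := staircaseGF_succ (x := x) hj hx
  have h₀ : staircaseGF k 0 x = 0 := staircaseGF_eq_zero (fun _ => Nat.succ_ne_zero _) x
  have h₁ : staircaseGF k (k + 1) x = 0 :=
    staircaseGF_eq_zero (fun a => (Nat.succ_lt_succ a.isLt).ne) x
  rw [tsum_card_isStaircase k hx, add_assoc,
    mul_sum_range_of_neighbor_recurrence (g := (staircaseGF k · x)) h3x ht hU hrec h₀ h₁]
  simp only [chebU]
end

section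
/- Let k ≥ 2 be an integer and let H_k(x) = Σ_{n≥0} (number of Hertzsprung words in [k]^n) x^n be the generating function of Hertzsprung words over k. Then H_k(x) = (1 - kx/(1+3x) - (2x²/(1+3x)²)·(U_k(σ) - U_{k-1}(σ) - 1)/U_k(σ))^{-1}, where σ = -(1+x)/(2x), valid wherever the right-hand side is defined (x ≠ 0, x ≠ -1/3, U_k(σ) ≠ 0, and the outer expression nonzero). -/
/-- A word `w` over `k` is Hertzsprung if `s(w) = 0`. -/
def IsHertzsprung {k n : ℕ} (w : Fin n → Fin k) : Prop := statS w = 0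

/-!
Weighting letters turns the transfer-matrix method into a telescoping sum. Let `c n a` be the
number of admissible words of length `n + 1` with first letter `a`, and `W n` the number of
admissible words of length `n`. Removing the first letter gives
`c (n + 1) a = W (n + 1) - ∑ c n b` over the `b` that may not follow `a`. If letter weights `g`
satisfy `g b + x ∑ g a = 1`, the sum being over the `a` that `b` may not follow, then pairing the
recurrence with `g` yields
`(1 - x ∑ g) W (n + 1) = ∑ g a * c n a - x ∑ g a * c (n + 1) a`, so that
`(1 - x ∑ g) ∑ W n x ^ n = 1`.
For Hertzsprung words the equation for `g` is tridiagonal with zero boundary values. Its constant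
solution is `1 / (1 + 3x)`, and `2xσ = -(1 + x)` makes the Chebyshev recurrence its homogeneous
version, so a combination of `U_i(σ)` and `U_{k-1-i}(σ)` corrects the boundary values.
-/

open Finset Filter Topology Polynomial

section Words

variable {α : Type*}

/-- The number of words of length `n` over `α` whose consecutive letters are all related by `R`. -/
noncomputable def chainCount (R : α → α → Prop) (n : ℕ) : ℕ :=
  Nat.card {w : Fin n → α // (List.ofFn w).IsChain R}

/-- The number of words of length `n + 1` over `α` with first letter `a` whose consecutive letters
are all related by `R`; only the remaining `n` letters are encoded. -/
noncomputable def chainCountFrom (R : α → α → Prop) (n : ℕ) (a : α) : ℕ :=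
  Nat.card {w : Fin n → α // (a :: List.ofFn w).IsChain R}

@[simp]
lemma chainCount_zero (R : α → α → Prop) : chainCount R 0 = 1 := by
  simp [chainCount]

@[simp]
lemma chainCountFrom_zero (R : α → α → Prop) (a : α) : chainCountFrom R 0 a = 1 := by
  simp [chainCountFrom]

variable [Fintype α]

lemma card_subtype_fin_succ {n : ℕ} (p : (Fin (n + 1) → α) → Prop) :
    Nat.card {w // p w} = ∑ a, Nat.card {w : Fin n → α // p (Fin.cons a w)} := by
  rw [← Nat.card_sigma]
  exact Nat.card_congr <|
    ((Fin.consEquiv fun _ => α).subtypeEquivOfSubtype (p := p)).symm.trans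
      (Equiv.subtypeProdEquivSigmaSubtype fun a w => p (Fin.cons a w))

lemma chainCount_succ (R : α → α → Prop) (n : ℕ) :
    chainCount R (n + 1) = ∑ a, chainCountFrom R n a := by
  simp [chainCount, chainCountFrom, card_subtype_fin_succ, List.ofFn_succ]

lemma chainCountFrom_succ (R : α → α → Prop) [DecidableRel R] (n : ℕ) (a : α) :
    chainCountFrom R (n + 1) a = ∑ b with R a b, chainCountFrom R n b := by
  rw [chainCountFrom, card_subtype_fin_succ, sum_filter]
  refine sum_congr rfl fun b _ => ?_
  by_cases hab : R a b <;> simp [chainCountFrom, List.ofFn_succ, hab]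

lemma chainCountFrom_succ_add_sum_filter_not (R : α → α → Prop) [DecidableRel R] (n : ℕ) (a : α) :
    chainCountFrom R (n + 1) a + ∑ b with ¬ R a b, chainCountFrom R n b =
      chainCount R (n + 1) := by
  rw [chainCountFrom_succ, chainCount_succ, sum_filter_add_sum_filter_not]

lemma norm_card_subtype_mul_pow_le {K : Type*} [NormedField K] {n : ℕ}
    (p : (Fin n → α) → Prop) (x : K) :
    ‖(Nat.card {w // p w} : K) * x ^ n‖ ≤ (Fintype.card α * ‖x‖) ^ n := by
  have card_le : Nat.card {w // p w} ≤ Fintype.card α ^ n := by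
    simpa using Finite.card_subtype_le p
  calc ‖(Nat.card {w // p w} : K) * x ^ n‖
      ≤ Nat.card {w // p w} * ‖x‖ ^ n := by
        rw [norm_mul, norm_pow]
        gcongr
        simpa using Nat.norm_cast_le (α := K) (Nat.card {w // p w})
    _ ≤ (Fintype.card α * ‖x‖) ^ n := by
        rw [mul_pow]
        gcongr
        exact_mod_cast card_le

end Words

section TransferMatrix

variable {α K : Type*} [Fintype α] {R : α → α → Prop} [DecidableRel R]

lemma one_sub_mul_sum_mul_chainCount_succ [CommRing K] {x : K} {g : α → K}
    (hg : ∀ b, g b + x * ∑ a with ¬ R a b, g a = 1) (n : ℕ) :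
    (1 - x * ∑ a, g a) * chainCount R (n + 1) =
      ∑ a, g a * chainCountFrom R n a - x * ∑ a, g a * chainCountFrom R (n + 1) a := by
  have first_letter_removal (a : α) : (chainCountFrom R (n + 1) a : K) =
      chainCount R (n + 1) - ∑ b with ¬ R a b, (chainCountFrom R n b : K) := by
    simp [← chainCountFrom_succ_add_sum_filter_not R n a]
  have sum_swap : ∑ a, g a * ∑ b with ¬ R a b, (chainCountFrom R n b : K) =
      ∑ b, (∑ a with ¬ R a b, g a) * chainCountFrom R n b := by
    simp only [mul_sum, sum_mul]
    exact sum_comm' (by simp)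
  have weight_eq : x * ∑ b, (∑ a with ¬ R a b, g a) * (chainCountFrom R n b : K) =
      chainCount R (n + 1) - ∑ b, g b * chainCountFrom R n b := by
    rw [chainCount_succ, Nat.cast_sum, ← sum_sub_distrib, mul_sum]
    exact sum_congr rfl fun b _ => by linear_combination (chainCountFrom R n b : K) * hg b
  simp only [first_letter_removal, mul_sub, sum_sub_distrib, sum_swap, ← sum_mul, weight_eq]
  ring

lemma one_sub_mul_sum_mul_sum_chainCount [CommRing K] {x : K} {g : α → K}
    (hg : ∀ b, g b + x * ∑ a with ¬ R a b, g a = 1) (N : ℕ) :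
    (1 - x * ∑ a, g a) * ∑ n ∈ range (N + 1), (chainCount R n : K) * x ^ n =
      1 - x * ∑ a, g a * (chainCountFrom R N a * x ^ N) := by
  induction N with
  | zero => simp
  | succ N ih =>
    simp only [← mul_assoc, ← sum_mul] at ih ⊢
    rw [sum_range_succ, mul_add, ih]
    linear_combination x ^ (N + 1) * one_sub_mul_sum_mul_chainCount_succ hg N

theorem hasSum_chainCount_mul_pow [NormedField K] {x : K} {g : α → K}
    (hx : Fintype.card α * ‖x‖ < 1) (hg : ∀ b, g b + x * ∑ a with ¬ R a b, g a = 1) :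
    HasSum (fun n => (chainCount R n : K) * x ^ n) (1 - x * ∑ a, g a)⁻¹ := by
  have geometric_tendsto := tendsto_pow_atTop_nhds_zero_of_lt_one (by positivity) hx
  have remainder_tendsto :
      Tendsto (fun N => 1 - x * ∑ a, g a * (chainCountFrom R N a * x ^ N)) atTop (𝓝 1) := by
    have from_tendsto (a : α) : Tendsto (fun N => (chainCountFrom R N a : K) * x ^ N) atTop (𝓝 0) :=
      squeeze_zero_norm (fun _ => norm_card_subtype_mul_pow_le _ x) geometric_tendsto
    simpa using ((tendsto_finsetSum univ fun a _ => (from_tendsto a).const_mul (g a)).const_mul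
      x).const_sub 1
  have denom_ne_zero : 1 - x * ∑ a, g a ≠ 0 := fun h => by
    simp [← one_sub_mul_sum_mul_sum_chainCount hg, h] at remainder_tendsto
  have summable_norm : Summable fun n => ‖(chainCount R n : K) * x ^ n‖ :=
    .of_nonneg_of_le (fun _ => norm_nonneg _) (fun _ => norm_card_subtype_mul_pow_le _ x)
      (summable_geometric_of_lt_one (by positivity) hx)
  rw [hasSum_iff_tendsto_nat_of_summable_norm summable_norm, ← tendsto_add_atTop_iff_nat 1]
  simpa [← one_sub_mul_sum_mul_sum_chainCount hg, denom_ne_zero] using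
    remainder_tendsto.const_mul (1 - x * ∑ a, g a)⁻¹

end TransferMatrix

lemma isHertzsprung_iff_isChain_ofFn {k n : ℕ} (w : Fin n → Fin k) :
    IsHertzsprung w ↔
      (List.ofFn w).IsChain fun a b : Fin k => 1 < |(b.val : ℤ) - a.val| := by
  simp only [IsHertzsprung, statS, card_eq_zero, filter_eq_empty_iff, mem_univ, true_imp_iff,
    not_le, List.isChain_ofFn]
  exact ⟨fun h i hi => h (x := ⟨i, by omega⟩), fun h i => h i (by omega)⟩

lemma sum_filter_abs_sub_le_one {M : Type*} [AddCommMonoid M] {k : ℕ} {G : ℤ → M}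
    (hG_neg_one : G (-1) = 0) (hG_k : G k = 0) (b : Fin k) :
    ∑ a : Fin k with |(b.val : ℤ) - a.val| ≤ 1, G a.val =
      G (b.val - 1) + G b.val + G (b.val + 1) := by
  calc ∑ a : Fin k with |(b.val : ℤ) - a.val| ≤ 1, G a.val
      = ∑ i ∈ {(b.val : ℤ) - 1, (b.val : ℤ), (b.val : ℤ) + 1}, G i := by
        refine sum_of_injOn (fun a : Fin k => (a.val : ℤ))
          (Nat.cast_injective.comp Fin.val_injective).injOn
          (fun a ha => by grind) (fun i hi hi_image => ?_) fun _ _ => rfl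
        simp only [mem_insert, mem_singleton] at hi
        have outside : i = -1 ∨ i = k := by
          by_contra! inside
          refine hi_image ⟨⟨i.toNat, by omega⟩, ?_, by dsimp only; omega⟩
          simp only [coe_filter, mem_univ, true_and, Set.mem_ofPred_eq, abs_le]
          omega
        rcases outside with rfl | rfl <;> assumption
    _ = G (b.val - 1) + G b.val + G (b.val + 1) := by
        rw [sum_insert (by grind), sum_pair (by simp), add_assoc]

lemma two_mul_X_sub_two_mul_sum_chebyshev_U (A : Type*) [CommRing A] (k : ℕ) :
    (2 * X - 2) * ∑ i ∈ range k, Chebyshev.U A i =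
      Chebyshev.U A k - Chebyshev.U A (k - 1) - 1 := by
  induction k with
  | zero => simp
  | succ k ih =>
    rw [sum_range_succ, mul_add, ih]
    push_cast
    rw [Chebyshev.U_add_one, add_sub_cancel_right]
    ring

section TridiagonalSystem

variable {K : Type*}

lemma chebyshev_U_eval_add_mul_eq_zero [CommRing K] {x σ : K} (hσ : 2 * x * σ = -(1 + x)) (i : ℤ) :
    (Chebyshev.U K i).eval σ + x * ((Chebyshev.U K (i - 1)).eval σ + (Chebyshev.U K i).eval σ +
      (Chebyshev.U K (i + 1)).eval σ) = 0 := by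
  simp only [Chebyshev.U_add_one, eval_sub, eval_mul, eval_ofNat, eval_X]
  linear_combination (Chebyshev.U K i).eval σ * hσ

variable [Field K] {k : ℕ} {x σ : K}

/-- The solution `g` of `g i + x (g (i - 1) + g i + g (i + 1)) = 1` with `g (-1) = g k = 0`, for
`2 x σ = -(1 + x)`. The letters `1, …, k` of the paper are `0, …, k - 1` here, and integer indices
make room for the boundary values. -/
noncomputable def letterWeight (k : ℕ) (x σ : K) (i : ℤ) : K :=
  (1 - ((Chebyshev.U K i).eval σ + (Chebyshev.U K (k - 1 - i)).eval σ) / (Chebyshev.U K k).eval σ) /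
    (1 + 3 * x)

lemma letterWeight_neg_one (hU : (Chebyshev.U K k).eval σ ≠ 0) : letterWeight k x σ (-1) = 0 := by
  simp [letterWeight, hU]

lemma letterWeight_natCast_self (hU : (Chebyshev.U K k).eval σ ≠ 0) :
    letterWeight k x σ k = 0 := by
  simp [letterWeight, hU]

lemma letterWeight_add_mul_eq_one (hσ : 2 * x * σ = -(1 + x)) (hx : 1 + 3 * x ≠ 0)
    (hU : (Chebyshev.U K k).eval σ ≠ 0) (i : ℤ) :
    letterWeight k x σ i + x * (letterWeight k x σ (i - 1) + letterWeight k x σ i +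
      letterWeight k x σ (i + 1)) = 1 := by
  have left := chebyshev_U_eval_add_mul_eq_zero hσ i
  have right := chebyshev_U_eval_add_mul_eq_zero hσ (k - 1 - i)
  rw [show (k : ℤ) - 1 - i - 1 = k - 1 - (i + 1) by ring,
    show (k : ℤ) - 1 - i + 1 = k - 1 - (i - 1) by ring] at right
  unfold letterWeight
  field_simp
  linear_combination -left - right

lemma sum_letterWeight (k : ℕ) (x σ : K) :
    ∑ a : Fin k, letterWeight k x σ a.val =
      (k - 2 * (∑ i ∈ range k, (Chebyshev.U K i).eval σ) / (Chebyshev.U K k).eval σ) /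
        (1 + 3 * x) := by
  have reflect : ∑ i ∈ range k, (Chebyshev.U K (k - 1 - i)).eval σ =
      ∑ i ∈ range k, (Chebyshev.U K i).eval σ := by
    rw [← sum_range_reflect]
    refine sum_congr rfl fun i hi => ?_
    rw [mem_range] at hi
    congr 2
    omega
  rw [Fin.sum_univ_eq_sum_range (fun i : ℕ => letterWeight k x σ i)]
  simp only [letterWeight, ← sum_div, sum_sub_distrib, sum_add_distrib, reflect, sum_const,
    card_range, nsmul_one, two_mul]

lemma mul_sum_letterWeight (hσ : 2 * x * σ = -(1 + x)) (k : ℕ) :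
    x * ∑ a : Fin k, letterWeight k x σ a.val =
      k * x / (1 + 3 * x) + 2 * x ^ 2 / (1 + 3 * x) ^ 2 *
        (((Chebyshev.U K k).eval σ - (Chebyshev.U K (k - 1)).eval σ - 1) /
          (Chebyshev.U K k).eval σ) := by
  have sum_U : (2 * σ - 2) * ∑ i ∈ range k, (Chebyshev.U K i).eval σ =
      (Chebyshev.U K k).eval σ - (Chebyshev.U K (k - 1)).eval σ - 1 := by
    simpa [eval_finsetSum] using congr_arg (eval σ) (two_mul_X_sub_two_mul_sum_chebyshev_U K k)
  have slope : x * (2 * σ - 2) = -(1 + 3 * x) := by linear_combination hσ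
  rw [sum_letterWeight, ← sum_U]
  generalize ∑ i ∈ range k, (Chebyshev.U K i).eval σ = S
  calc x * ((k - 2 * S / (Chebyshev.U K k).eval σ) / (1 + 3 * x))
      = k * x / (1 + 3 * x) + 2 * x / (1 + 3 * x) ^ 2 *
          (-(1 + 3 * x) * S / (Chebyshev.U K k).eval σ) := by field_simp; ring
    _ = k * x / (1 + 3 * x) + 2 * x ^ 2 / (1 + 3 * x) ^ 2 *
          ((2 * σ - 2) * S / (Chebyshev.U K k).eval σ) := by rw [← slope]; ring

end TridiagonalSystem

theorem gf_of_hertzsprung_words_general {K : Type*} [NormedField K] (k : ℕ) {x σ : K}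
    (hkx : k * ‖x‖ < 1) (hσ : 2 * x * σ = -(1 + x)) (hx : 1 + 3 * x ≠ 0)
    (hU : (Chebyshev.U K k).eval σ ≠ 0) :
    HasSum (fun n : ℕ => (Nat.card {w : Fin n → Fin k | IsHertzsprung w} : K) * x ^ n)
      (1 - k * x / (1 + 3 * x) -
        2 * x ^ 2 / (1 + 3 * x) ^ 2 *
          (((Chebyshev.U K k).eval σ - (Chebyshev.U K (k - 1)).eval σ - 1) /
            (Chebyshev.U K k).eval σ))⁻¹ := by
  have weight_eq (b : Fin k) : letterWeight k x σ b.val +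
      x * ∑ a : Fin k with ¬ 1 < |(b.val : ℤ) - a.val|,
        letterWeight k x σ a.val = 1 := by
    simp only [not_lt]
    rw [sum_filter_abs_sub_le_one (letterWeight_neg_one hU) (letterWeight_natCast_self hU),
      letterWeight_add_mul_eq_one hσ hx hU]
  rw [sub_sub, ← mul_sum_letterWeight hσ]
  simp only [isHertzsprung_iff_isChain_ofFn]
  exact hasSum_chainCount_mul_pow (by simpa using hkx) weight_eq

/-- The generating function `H_k(x) = Σ_{n≥0} (#Hertzsprung words in [k]^n) xⁿ` equals
`(1 - kx/(1+3x) - (2x²/(1+3x)²)·(U_k(σ) - U_{k-1}(σ) - 1)/U_k(σ))⁻¹` with `σ = -(1+x)/(2x)`,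
wherever the right-hand side is defined (for sufficiently small `x`). -/
theorem gf_of_hertzsprung_words (k : ℕ) (hk : 2 ≤ k) :
    ∃ ε > 0, ∀ x : ℝ, |x| < ε →
      x ≠ 0 →
      x ≠ -(1 / 3) →
      chebU (k : ℤ) (-((1 + x) / (2 * x))) ≠ 0 →
      1 - k * x / (1 + 3 * x) -
          2 * x ^ 2 / (1 + 3 * x) ^ 2 *
            ((chebU (k : ℤ) (-((1 + x) / (2 * x))) -
                chebU ((k : ℤ) - 1) (-((1 + x) / (2 * x))) - 1) /
              chebU (k : ℤ) (-((1 + x) / (2 * x)))) ≠ 0 →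
      ∑' n : ℕ, (Nat.card {w : Fin n → Fin k | IsHertzsprung w} : ℝ) * x ^ n =
        (1 - k * x / (1 + 3 * x) -
            2 * x ^ 2 / (1 + 3 * x) ^ 2 *
              ((chebU (k : ℤ) (-((1 + x) / (2 * x))) -
                  chebU ((k : ℤ) - 1) (-((1 + x) / (2 * x))) - 1) /
                chebU (k : ℤ) (-((1 + x) / (2 * x)))))⁻¹ := by
  have hk_pos : (0 : ℝ) < k := by positivity
  refine ⟨1 / k, by positivity, fun x hxk hx0 hx3 hU _ => ?_⟩
  exact (gf_of_hertzsprung_words_general k ((lt_div_iff₀' hk_pos).1 hxk) (by field_simp)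
    (fun h => hx3 (by linarith)) hU).tsum_eq
end

section
/- Let k ≥ 2 be an integer. Set σ = -(1+x)/(2x) and γ(x,0) = k/(1+3x) + (2x/(1+3x)²)·(U_k(σ) - U_{k-1}(σ) - 1)/U_k(σ). Then the generating function of the number of cyclic Hertzsprung words over k, Σ_{n≥0} (number of w ∈ [k]^n with cs(w) = 0) x^n, equals 1 + ((1-3x)/((1+3x)(1-x))) · [ 1/(1 - xγ(x,0)) + (2x(k+1)/((1-3x)·U_k(σ))) · ( (1 - x(1 + k - U_k(σ))/(1+3x))/(1 - xγ(x,0)) + U_{k-1}(σ) - 1 ) - kx - 1 ], valid wherever the right-hand side is defined. -/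
/-- The cyclic statistic `cs(w)`: the number of indices `0 ≤ i ≤ n-1` with
`|w_{i+1} - w_i| ≤ 1`, where `w_0` is interpreted as `w_n`. -/
def statCS {k n : ℕ} (w : Fin n → Fin k) : ℕ :=
  (Finset.univ.filter fun i : Fin n =>
    |((w ⟨((i : ℕ) + 1) % n, Nat.mod_lt _ i.pos⟩ : ℕ) : ℤ) - ((w i : ℕ) : ℤ)| ≤ 1).card

/-- `σ = -(1+x)/(2x)`. -/
noncomputable def sigm (x : ℝ) : ℝ := -((1 + x) / (2 * x))

/-- `γ(x,0) = k/(1+3x) + (2x/(1+3x)²)·(U_k(σ) - U_{k-1}(σ) - 1)/U_k(σ)`. -/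
noncomputable def gam0 (k : ℕ) (x : ℝ) : ℝ :=
  (k : ℝ) / (1 + 3 * x) +
    2 * x / (1 + 3 * x) ^ 2 *
      ((chebU (k : ℤ) (sigm x) - chebU ((k : ℤ) - 1) (sigm x) - 1) / chebU (k : ℤ) (sigm x))

/-!
A word is a cyclic Hertzsprung word exactly when it is a closed walk in the complement of the path
graph on `[k]`, so for `n ≥ 1` there are `tr (Bⁿ)` of them, `B` being the adjacency matrix of that
complement, and the generating function is `tr (1 - xB)⁻¹ + 1 - k`. If `A` is the adjacency matrix
of the path and `J` the all-ones matrix, then `1 - xB = T - xJ` with `T = (1 + x) + xA`. Up to the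
factor `-x`, `T` is `2σ - A`, whose inverse is a Green matrix of products of Chebyshev polynomials
at `σ`. As `J` has rank one, the Sherman–Morrison formula gives
`tr (T - xJ)⁻¹ = tr T⁻¹ + x ⟨y, y⟩ / (1 - x ⟨1, y⟩)` with `T y = 1`. Here `⟨1, y⟩ = γ(x, 0)`, and
all three quantities are linear, quadratic or convolution sums of Chebyshev polynomials.

The polynomials `S n` of Mathlib satisfy `S n (2t) = U n (t)`, so they are evaluated at `s = 2σ`,
which the equation `x * s = -(1 + x)` determines.
-/

open Finset Matrix SimpleGraph
open Polynomial hiding smul_pow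
open Polynomial.Chebyshev (S S_add_two S_sub_one S_add_one)

section ChebyshevIdentities

variable (R : Type*) [CommRing R]

theorem chebyshevS_add (m n : ℤ) :
    S R (m + n) = S R m * S R n - S R (m - 1) * S R (n - 1) := by
  induction n using Chebyshev.induct with
  | zero => simp
  | one => simp [S_add_one R m, mul_comm]
  | add_two n ih₁ ih₀ =>
    linear_combination (norm := ring_nf)
      S_add_two R (m + n) - S R m * S_add_two R n + S R (m - 1) * S_add_two R (n - 1) +
        X * ih₁ - ih₀
  | neg_add_one n ih₀ ih₁ =>
    linear_combination (norm := ring_nf)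
      S_sub_one R (m - n) - S R m * S_sub_one R (-n) + S R (m - 1) * S_sub_one R (-n - 1) +
        X * ih₀ - ih₁

theorem X_sub_two_mul_sum_chebyshevS (n : ℕ) :
    (X - 2) * ∑ i ∈ range n, S R i = S R n - S R (n - 1) - 1 := by
  induction n with
  | zero => simp
  | succ n ih =>
    rw [sum_range_succ]
    push_cast
    linear_combination (norm := ring_nf) ih - S_add_one R n

theorem X_sq_sub_four_mul_sum_chebyshevS_sq (n : ℕ) :
    (X ^ 2 - 4) * ∑ i ∈ range n, S R i ^ 2 = S R n ^ 2 - S R (n - 1) ^ 2 - 1 - 2 * (n : R[X]) := by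
  induction n with
  | zero => simp
  | succ n ih =>
    have pell := Chebyshev.S_sq_add_S_sq R (n - 1)
    rw [sub_add_cancel] at pell
    rw [sum_range_succ]
    push_cast
    rw [S_add_one, add_sub_cancel_right]
    linear_combination ih - 2 * pell

theorem sum_chebyshevS_mul_chebyshevS_add_two (n : ℕ) :
    ∑ i ∈ range (n + 2), S R i * S R (n + 1 - i) =
      X * ∑ i ∈ range (n + 1), S R i * S R (n - i) -
        ∑ i ∈ range n, S R i * S R (n - 1 - i) + S R (n + 1) := by
  have extend : ∑ i ∈ range n, S R i * S R (n - 1 - i) =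
      ∑ i ∈ range (n + 1), S R i * S R (n - 1 - i) := by
    simp [sum_range_succ, show (n : ℤ) - 1 - n = -1 by ring]
  rw [extend, sum_range_succ, mul_sum, ← sum_sub_distrib]
  congr 1
  · refine sum_congr rfl fun i _ => ?_
    linear_combination (norm := ring_nf) S R i * S_add_one R (n - i)
  · simp

theorem X_sq_sub_four_mul_sum_chebyshevS_mul_chebyshevS (n : ℕ) :
    (X ^ 2 - 4) * ∑ i ∈ range n, S R i * S R (n - 1 - i) =
      (n : R[X]) * X * S R n - 2 * ((n : R[X]) + 1) * S R (n - 1) := by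
  induction n using Nat.twoStepInduction with
  | zero => simp
  | one => simp; ring
  | more n ih₀ ih₁ =>
    have recurrence := sum_chebyshevS_mul_chebyshevS_add_two R n
    have h₁ := S_add_one R n
    have h₂ := S_add_two R n
    push_cast at ih₁ ⊢
    simp only [add_sub_cancel_right, show (n : ℤ) + 2 - 1 = n + 1 by ring] at ih₁ ⊢
    rw [recurrence, h₂]
    linear_combination X * ih₁ - ih₀ + 2 * (n + 1) * h₁

theorem chebyshevS_green_recurrence (n j m : ℤ) :
    X * (S R (min m j) * S R (n - 1 - max m j)) -
        (S R (min (m - 1) j) * S R (n - 1 - max (m - 1) j) +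
          S R (min (m + 1) j) * S R (n - 1 - max (m + 1) j)) =
      if m = j then S R n else 0 := by
  rcases lt_trichotomy m j with h | rfl | h
  · rw [if_neg h.ne, min_eq_left h.le, max_eq_right h.le, min_eq_left (by omega),
      max_eq_right (by omega), min_eq_left (by omega), max_eq_right (by omega), S_add_one]
    ring
  · have add := chebyshevS_add R (m + 1) (n - 1 - m)
    rw [show m + 1 + (n - 1 - m) = n by ring, add_sub_cancel_right, S_add_one] at add
    rw [if_pos rfl, min_self, max_self, min_eq_left (by omega), max_eq_right (by omega),
      min_eq_right (by omega), max_eq_left (by omega), add]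
    ring_nf
  · rw [if_neg h.ne', min_eq_right h.le, max_eq_left h.le, min_eq_right (by omega),
      max_eq_left (by omega), min_eq_right (by omega), max_eq_left (by omega)]
    linear_combination (norm := ring_nf) -S R j * S_add_one R (n - 1 - m)

end ChebyshevIdentities

section WordsAndTraces

variable {α R : Type*}

theorem snoc_eq_cons_add_one {n : ℕ} (a : α) (w : Fin n → α) (i : Fin (n + 1)) :
    (Fin.snoc w a : Fin (n + 1) → α) i = (Fin.cons a w : Fin (n + 1) → α) (i + 1) := by
  induction i using Fin.lastCases with
  | last => simp
  | cast i => simp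

variable [Fintype α]

theorem sum_fin_succ_arrow [AddCommMonoid R] {n : ℕ} (f : (Fin (n + 1) → α) → R) :
    ∑ w, f w = ∑ a, ∑ w : Fin n → α, f (Fin.cons a w) := by
  rw [← (Fin.consEquiv fun _ => α).sum_comp, Fintype.sum_prod_type]
  rfl

variable [DecidableEq α]

theorem matrix_pow_succ_apply [CommSemiring R] (A : Matrix α α R) (n : ℕ) (a b : α) :
    (A ^ (n + 1)) a b = ∑ w : Fin n → α, ∏ i : Fin (n + 1),
      A ((Fin.cons a w : Fin (n + 1) → α) i) ((Fin.snoc w b : Fin (n + 1) → α) i) := by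
  induction n generalizing a with
  | zero => simp [Fin.snoc]
  | succ n ih =>
    simp only [pow_succ' A (n + 1), mul_apply, ih, mul_sum, sum_fin_succ_arrow]
    refine sum_congr rfl fun c _ => sum_congr rfl fun w _ => ?_
    rw [Fin.prod_univ_succ (n := n + 1), ← Fin.cons_snoc_eq_snoc_cons]
    simp only [Fin.cons_zero, Fin.cons_succ]

theorem trace_pow_succ [CommSemiring R] (A : Matrix α α R) (n : ℕ) :
    (A ^ (n + 1)).trace = ∑ w : Fin (n + 1) → α, ∏ i, A (w i) (w (i + 1)) := by
  simp only [trace, diag_apply, matrix_pow_succ_apply, snoc_eq_cons_add_one, sum_fin_succ_arrow]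

theorem trace_adjMatrix_pow_succ [CommSemiring R] (G : SimpleGraph α) [DecidableRel G.Adj]
    (n : ℕ) :
    (G.adjMatrix R ^ (n + 1)).trace =
      Nat.card {w : Fin (n + 1) → α // ∀ i, G.Adj (w i) (w (i + 1))} := by
  simp only [trace_pow_succ, adjMatrix_apply, Finset.prod_boole, mem_univ, forall_true_left,
    sum_boole, Nat.card_eq_fintype_card, Fintype.card_subtype]

open scoped Matrix.Norms.Operator in
theorem eventually_hasSum_trace_pow_mul_pow {𝕜 : Type*} [NormedField 𝕜] [CompleteSpace 𝕜]
    (A : Matrix α α 𝕜) :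
    ∀ᶠ x in nhds (0 : 𝕜),
      HasSum (fun n : ℕ => (A ^ n).trace * x ^ n) (1 - x • A)⁻¹.trace := by
  -- The uniformity of the operator norm agrees with the product one, but only after unfolding.
  have : @CompleteSpace (Matrix α α 𝕜) PseudoMetricSpace.toUniformSpace :=
    inferInstanceAs (CompleteSpace (Matrix α α 𝕜))
  have small : ∀ᶠ x in nhds (0 : 𝕜), ‖x • A‖ < 1 :=
    (Continuous.tendsto' (by fun_prop) 0 0 (by simp)).eventually_lt_const one_pos
  filter_upwards [small] with x hx
  have geometric := (hasSum_geom_series_inverse (x • A) hx).map (traceAddMonoidHom α 𝕜)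
    continuous_id.matrix_trace
  rw [← nonsing_inv_eq_ringInverse] at geometric
  simpa [Function.comp_def, smul_pow, mul_comm] using geometric

end WordsAndTraces

section RankOneUpdate

variable {n K : Type*} [Fintype n] [DecidableEq n] [Field K]

theorem inv_sub_vecMulVec {A : Matrix n n K} (hA : IsUnit A.det) (u v : n → K)
    (h : 1 - v ⬝ᵥ A⁻¹ *ᵥ u ≠ 0) :
    (A - vecMulVec u v)⁻¹ =
      A⁻¹ + (1 - v ⬝ᵥ A⁻¹ *ᵥ u)⁻¹ • vecMulVec (A⁻¹ *ᵥ u) (v ᵥ* A⁻¹) := by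
  refine inv_eq_right_inv ?_
  set d := v ⬝ᵥ A⁻¹ *ᵥ u
  have image : A * vecMulVec (A⁻¹ *ᵥ u) (v ᵥ* A⁻¹) = vecMulVec u (v ᵥ* A⁻¹) := by
    rw [mul_vecMulVec, mulVec_mulVec, mul_nonsing_inv A hA, one_mulVec]
  have projection : vecMulVec u v * vecMulVec (A⁻¹ *ᵥ u) (v ᵥ* A⁻¹) =
      d • vecMulVec u (v ᵥ* A⁻¹) := by
    rw [vecMulVec_mul_vecMulVec, vecMulVec_smul]
  rw [sub_mul, mul_add, mul_add, mul_smul_comm, mul_smul_comm, image, projection,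
    mul_nonsing_inv A hA, vecMulVec_mul]
  match_scalars
  · simp
  · field_simp
    ring

theorem trace_inv_sub_smul_vecMulVec_one {A : Matrix n n K} (hA : IsUnit A.det) (hsymm : A.IsSymm)
    (x : K) {y : n → K} (hy : A *ᵥ y = 1) (h : 1 - x * ∑ i, y i ≠ 0) :
    (A - x • vecMulVec 1 1)⁻¹.trace =
      A⁻¹.trace + x * (∑ i, y i ^ 2) / (1 - x * ∑ i, y i) := by
  have inv_mulVec_one : A⁻¹ *ᵥ 1 = y := by
    rw [← hy, mulVec_mulVec, nonsing_inv_mul A hA, one_mulVec]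
  have one_vecMul_inv : 1 ᵥ* A⁻¹ = y := by
    rw [← inv_mulVec_one, ← vecMul_transpose, transpose_nonsing_inv, hsymm.eq]
  have pairing : 1 ⬝ᵥ A⁻¹ *ᵥ (x • 1) = x * ∑ i, y i := by
    rw [mulVec_smul, inv_mulVec_one, dotProduct_smul, one_dotProduct, smul_eq_mul]
  rw [← smul_vecMulVec, inv_sub_vecMulVec hA _ _ (by rwa [pairing]), pairing, mulVec_smul,
    inv_mulVec_one, one_vecMul_inv, trace_add, trace_smul, trace_vecMulVec, smul_dotProduct,
    smul_eq_mul, smul_eq_mul, inv_mul_eq_div]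
  simp only [dotProduct, sq]

end RankOneUpdate

section PathGraph

variable {k : ℕ}

instance : DecidableRel (pathGraph k).Adj := fun _ _ => decidable_of_iff' _ pathGraph_adj

theorem pathGraph_adjMatrix_mulVec_apply {R : Type*} [NonAssocSemiring R] {f : ℤ → R}
    (h₀ : f (-1) = 0) (hk : f k = 0) (i : Fin k) :
    ((pathGraph k).adjMatrix R *ᵥ fun j => f j) i = f (i - 1) + f (i + 1) := by
  have left : ∑ j : Fin k, (if (j : ℕ) + 1 = i then f j else 0) = f (i - 1) := by
    obtain ⟨i | i, hi⟩ := i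
    · simp [h₀]
    · rw [Fin.sum_univ_eq_sum_range (fun j => if j + 1 = i + 1 then f j else 0) k]
      simp [show i < k by omega]
  have right : ∑ j : Fin k, (if (i : ℕ) + 1 = j then f j else 0) = f (i + 1) := by
    rw [Fin.sum_univ_eq_sum_range (fun j => if (i : ℕ) + 1 = j then f j else 0) k, sum_ite_eq]
    split_ifs with h
    · simp
    · rw [← hk]
      congr 1
      grind
  rw [← left, ← right, ← sum_add_distrib]
  simp only [mulVec, dotProduct, adjMatrix_apply, pathGraph_adj]
  refine sum_congr rfl fun j _ => ?_
  split_ifs <;> first | omega | simp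

/-- The Green matrix of the path on `k` vertices at the spectral parameter `s`: up to the factor
`S_k(s)` it is the inverse of `s - A`, where `A` is the adjacency matrix. -/
noncomputable def pathGreen {R : Type*} [CommRing R] (k : ℕ) (s : R) : Matrix (Fin k) (Fin k) R :=
  of fun i j =>
    (S R (min (i : ℤ) j)).eval s * (S R (k - 1 - max (i : ℤ) j)).eval s

variable {R : Type*} [CommRing R] (s : R)

theorem smul_one_sub_pathGraph_adjMatrix_mulVec {f : ℤ → R} (h₀ : f (-1) = 0) (hk : f k = 0)
    (i : Fin k) :
    ((s • (1 : Matrix (Fin k) (Fin k) R) - (pathGraph k).adjMatrix R) *ᵥ fun j => f j) i =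
      s * f i - (f (i - 1) + f (i + 1)) := by
  rw [sub_mulVec, smul_mulVec, one_mulVec, Pi.sub_apply, pathGraph_adjMatrix_mulVec_apply h₀ hk]
  rfl

theorem smul_one_sub_pathGraph_adjMatrix_mul_pathGreen :
    (s • (1 : Matrix (Fin k) (Fin k) R) - (pathGraph k).adjMatrix R) * pathGreen k s =
      (S R k).eval s • 1 := by
  ext i j
  have boundary := smul_one_sub_pathGraph_adjMatrix_mulVec (k := k) s
    (f := fun m => (S R (min m j)).eval s * (S R (k - 1 - max m j)).eval s)
    (by simp) (by simp [show (k : ℤ) - 1 - k = -1 by ring]) i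
  have recurrence := congr_arg (eval s) (chebyshevS_green_recurrence R k j i)
  simp only [eval_sub, eval_add, eval_mul, eval_X] at recurrence
  calc _ = _ := boundary
    _ = _ := recurrence
    _ = _ := by simp [one_apply, Fin.ext_iff, apply_ite (eval s)]

end PathGraph

section TransferMatrix

variable {R : Type*} [CommRing R] {k : ℕ} {x s : R}

/-- The matrix `(1 + x) + xA` of the path on `k` vertices. It differs from the resolvent
denominator `1 - xAᶜ` of the complement of the path by `x` times the all-ones matrix. -/
def pathTransfer (k : ℕ) (x : R) : Matrix (Fin k) (Fin k) R :=
  (1 + x) • 1 + x • (pathGraph k).adjMatrix R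

theorem one_sub_smul_adjMatrix_compl (k : ℕ) (x : R) :
    1 - x • (pathGraph k)ᶜ.adjMatrix R = pathTransfer k x - x • vecMulVec 1 1 := by
  ext i j
  by_cases h : i = j <;> by_cases hadj : (pathGraph k).Adj i j <;>
    simp_all [pathTransfer, one_apply]

theorem pathTransfer_isSymm (k : ℕ) (x : R) : (pathTransfer k x).IsSymm :=
  (isSymm_one.smul _).add (((pathGraph k).isSymm_adjMatrix).smul _)

theorem pathTransfer_eq_smul (hs : x * s = -(1 + x)) :
    pathTransfer k x = (-x) • (s • 1 - (pathGraph k).adjMatrix R) := by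
  rw [pathTransfer, smul_sub, smul_smul, neg_mul, hs, neg_neg, neg_smul, sub_neg_eq_add]

theorem pathTransfer_mul_pathGreen (hs : x * s = -(1 + x)) :
    pathTransfer k x * pathGreen k s = -(x * (S R k).eval s) • 1 := by
  rw [pathTransfer_eq_smul hs, smul_mul, smul_one_sub_pathGraph_adjMatrix_mul_pathGreen, smul_smul,
    neg_mul]

theorem trace_pathGreen (k : ℕ) (s : R) :
    (pathGreen k s).trace = ∑ i ∈ range k, (S R i).eval s * (S R (k - 1 - i)).eval s := by
  simp only [trace, diag_apply, pathGreen, of_apply, min_self, max_self]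
  exact Fin.sum_univ_eq_sum_range (fun i : ℕ => (S R i).eval s * (S R (k - 1 - i)).eval s) k

theorem sum_eval_chebyshevS_reflect {M : Type*} [AddCommMonoid M] (f : R → M) (k : ℕ) (s : R) :
    ∑ i ∈ range k, f ((S R (k - 1 - i)).eval s) = ∑ i ∈ range k, f ((S R i).eval s) := by
  rw [← sum_range_reflect]
  refine sum_congr rfl fun i hi => ?_
  congr 3
  grind

theorem mul_sum_eval_chebyshevS (hs : x * s = -(1 + x)) :
    (1 + 3 * x) * ∑ i ∈ range k, (S R i).eval s =
      -x * ((S R k).eval s - (S R (k - 1)).eval s - 1) := by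
  have h := congr_arg (eval s) (X_sub_two_mul_sum_chebyshevS R k)
  simp only [eval_mul, eval_sub, eval_X, eval_ofNat, eval_finsetSum, eval_one] at h
  linear_combination -x * h + (∑ i ∈ range k, (S R i).eval s) * hs

theorem mul_sum_eval_chebyshevS_sq (hs : x * s = -(1 + x)) :
    (1 + 3 * x) * (1 - x) * ∑ i ∈ range k, (S R i).eval s ^ 2 =
      x ^ 2 * ((S R k).eval s ^ 2 - (S R (k - 1)).eval s ^ 2 - 1 - 2 * k) := by
  have h := congr_arg (eval s) (X_sq_sub_four_mul_sum_chebyshevS_sq R k)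
  simp only [eval_mul, eval_sub, eval_pow, eval_X, eval_ofNat, eval_finsetSum, eval_one,
    eval_natCast] at h
  linear_combination x ^ 2 * h - (x * s - 1 - x) * (∑ i ∈ range k, (S R i).eval s ^ 2) * hs

theorem mul_trace_pathGreen (hs : x * s = -(1 + x)) :
    (1 + 3 * x) * (1 - x) * (pathGreen k s).trace =
      -x * (k * (1 + x) * (S R k).eval s + 2 * x * (k + 1) * (S R (k - 1)).eval s) := by
  have h := congr_arg (eval s) (X_sq_sub_four_mul_sum_chebyshevS_mul_chebyshevS R k)
  simp only [eval_mul, eval_sub, eval_add, eval_pow, eval_X, eval_ofNat, eval_finsetSum, eval_one,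
    eval_natCast] at h
  rw [← trace_pathGreen] at h
  linear_combination x ^ 2 * h - (x * s - 1 - x) * (pathGreen k s).trace * hs +
    x * k * (S R k).eval s * hs

end TransferMatrix

section Resolvent

variable {K : Type*} [Field K] {k : ℕ} {x s : K}

theorem ne_zero_of_mul_eq_neg_one_add (hs : x * s = -(1 + x)) : x ≠ 0 := by
  rintro rfl
  simp at hs

theorem pathTransfer_mul_smul_pathGreen (hs : x * s = -(1 + x)) (hU : (S K k).eval s ≠ 0) :
    pathTransfer k x * ((-(x * (S K k).eval s))⁻¹ • pathGreen k s) = 1 := by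
  have hx := ne_zero_of_mul_eq_neg_one_add hs
  rw [mul_smul_comm, pathTransfer_mul_pathGreen hs,
    inv_smul_smul₀ (neg_ne_zero.mpr (mul_ne_zero hx hU))]

theorem trace_inv_pathTransfer (hs : x * s = -(1 + x)) (hU : (S K k).eval s ≠ 0) :
    (1 + 3 * x) * (1 - x) * (pathTransfer k x)⁻¹.trace =
      k * (1 + x) + 2 * x * (k + 1) * (S K (k - 1)).eval s / (S K k).eval s := by
  have hx := ne_zero_of_mul_eq_neg_one_add hs
  rw [inv_eq_right_inv (pathTransfer_mul_smul_pathGreen hs hU), trace_smul, smul_eq_mul]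
  field_simp
  linear_combination -mul_trace_pathGreen (k := k) hs

/-- The solution `y` of `(1 + x) y + xAy = 1` on the path with `k` vertices, where `s` is the
spectral parameter `-(1 + x) / x`: the constant solution `1 / (1 + 3x)` of the recurrence,
corrected so as to vanish at the positions `-1` and `k`. -/
noncomputable def pathSolution (k : ℕ) (x s : K) (i : ℤ) : K :=
  (1 - ((S K i).eval s + (S K (k - 1 - i)).eval s) / (S K k).eval s) / (1 + 3 * x)

theorem pathTransfer_mulVec_pathSolution (hs : x * s = -(1 + x)) (h₃ : 1 + 3 * x ≠ 0)
    (hU : (S K k).eval s ≠ 0) :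
    (pathTransfer k x *ᵥ fun i => pathSolution k x s i) = 1 := by
  ext i
  have recurrence (n : ℤ) :
      (S K (n - 1)).eval s + (S K (n + 1)).eval s = s * (S K n).eval s := by
    simp [S_add_one]
  have left := recurrence i
  have right := recurrence (k - 1 - i)
  rw [pathTransfer_eq_smul hs, smul_mulVec, Pi.smul_apply,
    smul_one_sub_pathGraph_adjMatrix_mulVec s (by simp [pathSolution, hU])
      (by simp [pathSolution, hU, show (k : ℤ) - 1 - k = -1 by ring])]
  simp only [pathSolution, smul_eq_mul, Pi.one_apply,
    show (k : ℤ) - 1 - (i - 1) = k - 1 - i + 1 by ring,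
    show (k : ℤ) - 1 - (i + 1) = k - 1 - i - 1 by ring]
  -- `field_simp` rewrites `3 * x` to `x * 3` and then looks for the hypothesis in that form.
  rw [mul_comm 3 x] at h₃ ⊢
  field_simp
  linear_combination -x * left - x * right - (S K k).eval s * hs

/-- The sum `γ(x, 0)` of the entries of the solution `y` of `(1 + x) y + xAy = 1`, in closed
form. -/
noncomputable def pathGamma (k : ℕ) (x s : K) : K :=
  k / (1 + 3 * x) + 2 * x / (1 + 3 * x) ^ 2 *
    (((S K k).eval s - (S K (k - 1)).eval s - 1) / (S K k).eval s)

theorem sum_pathSolution (hs : x * s = -(1 + x)) (h₃ : 1 + 3 * x ≠ 0) (hU : (S K k).eval s ≠ 0) :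
    ∑ i : Fin k, pathSolution k x s i = pathGamma k x s := by
  have reflect := sum_eval_chebyshevS_reflect id k s
  simp only [id] at reflect
  rw [Fin.sum_univ_eq_sum_range (fun i => pathSolution k x s i)]
  simp only [pathSolution, pathGamma, ← sum_div, sum_sub_distrib, sum_add_distrib, reflect,
    sum_const, card_range, nsmul_eq_mul]
  field_simp
  linear_combination -2 * mul_sum_eval_chebyshevS (k := k) hs

theorem sum_pathSolution_sq (k : ℕ) (hU : (S K k).eval s ≠ 0) :
    ∑ i : Fin k, pathSolution k x s i ^ 2 =
      (k * (S K k).eval s ^ 2 - 4 * (∑ i ∈ range k, (S K i).eval s) * (S K k).eval s +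
        2 * ∑ i ∈ range k, (S K i).eval s ^ 2 + 2 * (pathGreen k s).trace) /
        ((S K k).eval s * (1 + 3 * x)) ^ 2 := by
  have expand (i : ℤ) : pathSolution k x s i ^ 2 =
      ((S K k).eval s ^ 2 - 2 * (S K k).eval s * ((S K i).eval s + (S K (k - 1 - i)).eval s) +
        ((S K i).eval s ^ 2 + (S K (k - 1 - i)).eval s ^ 2) +
        2 * ((S K i).eval s * (S K (k - 1 - i)).eval s)) / ((S K k).eval s * (1 + 3 * x)) ^ 2 := by
    rw [pathSolution]
    field_simp
    ring
  have reflect := sum_eval_chebyshevS_reflect id k s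
  simp only [id] at reflect
  have reflect_sq := sum_eval_chebyshevS_reflect (· ^ 2) k s
  simp only [expand]
  rw [← sum_div, Fin.sum_univ_eq_sum_range (fun i => (S K k).eval s ^ 2 -
    2 * (S K k).eval s * ((S K i).eval s + (S K (k - 1 - i)).eval s) +
    ((S K i).eval s ^ 2 + (S K (k - 1 - i)).eval s ^ 2) +
    2 * ((S K i).eval s * (S K (k - 1 - i)).eval s))]
  simp only [sum_add_distrib, sum_sub_distrib, ← mul_sum, reflect, reflect_sq, sum_const,
    card_range, nsmul_eq_mul, trace_pathGreen]
  ring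

theorem mul_sum_pathSolution_sq (hs : x * s = -(1 + x)) (h₃ : 1 + 3 * x ≠ 0)
    (hU : (S K k).eval s ≠ 0) :
    (1 + 3 * x) * (1 - x) * ∑ i : Fin k, pathSolution k x s i ^ 2 =
      (1 - 3 * x) * pathGamma k x s + 2 * x * (k + 1) / (S K k).eval s *
        (pathGamma k x s - (1 + k - (S K k).eval s) / (1 + 3 * x)) := by
  have pell := congr_arg (eval s) (Chebyshev.S_sq_add_S_sq K (k - 1))
  rw [sub_add_cancel] at pell
  simp only [eval_sub, eval_add, eval_mul, eval_pow, eval_X, eval_one] at pell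
  have sum := mul_sum_eval_chebyshevS (k := k) hs
  have sum_sq := mul_sum_eval_chebyshevS_sq (k := k) hs
  have convolution := mul_trace_pathGreen (k := k) hs
  rw [sum_pathSolution_sq k hU, pathGamma]
  field_simp
  linear_combination -4 * (1 - x) * (S K k).eval s * sum + 2 * sum_sq + 2 * convolution -
    2 * x ^ 2 * pell - 2 * x * (S K k).eval s * (S K (k - 1)).eval s * hs

theorem trace_inv_one_sub_smul_compl_eq_add (hs : x * s = -(1 + x)) (h₃ : 1 + 3 * x ≠ 0)
    (hU : (S K k).eval s ≠ 0) (hγ : 1 - x * pathGamma k x s ≠ 0) :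
    (1 - x • (pathGraph k)ᶜ.adjMatrix K)⁻¹.trace =
      (pathTransfer k x)⁻¹.trace +
        x * (∑ i : Fin k, pathSolution k x s i ^ 2) /
          (1 - x * pathGamma k x s) := by
  have unit : IsUnit (pathTransfer k x).det :=
    isUnit_det_of_right_inverse (pathTransfer_mul_smul_pathGreen hs hU)
  rw [← sum_pathSolution hs h₃ hU] at hγ ⊢
  rw [one_sub_smul_adjMatrix_compl, trace_inv_sub_smul_vecMulVec_one unit (pathTransfer_isSymm k x)
    x (pathTransfer_mulVec_pathSolution hs h₃ hU) hγ]

theorem trace_inv_one_sub_smul_compl_add_one_sub (hs : x * s = -(1 + x)) (h₃ : 1 + 3 * x ≠ 0)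
    (h₃' : 1 - 3 * x ≠ 0) (h₁ : 1 - x ≠ 0) (hU : (S K k).eval s ≠ 0)
    (hγ : 1 - x * pathGamma k x s ≠ 0) :
    (1 - x • (pathGraph k)ᶜ.adjMatrix K)⁻¹.trace + (1 - k) =
      1 + (1 - 3 * x) / ((1 + 3 * x) * (1 - x)) *
        (1 / (1 - x * pathGamma k x s) +
          2 * x * (k + 1) / ((1 - 3 * x) * (S K k).eval s) *
            ((1 - x * ((1 + k - (S K k).eval s) / (1 + 3 * x))) / (1 - x * pathGamma k x s) +
              (S K (k - 1)).eval s - 1) -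
          k * x - 1) := by
  have path := trace_inv_pathTransfer hs hU
  have energy := mul_sum_pathSolution_sq hs h₃ hU
  rw [trace_inv_one_sub_smul_compl_eq_add hs h₃ hU hγ]
  rw [mul_comm, ← eq_div_iff (mul_ne_zero h₃ h₁)] at path energy
  rw [path, energy]
  generalize pathGamma k x s = γ at *
  rw [mul_comm 3 x] at h₃ h₃' ⊢
  field_simp
  ring

end Resolvent

section CyclicHertzsprungWords

variable {k n : ℕ}

theorem pathGraph_compl_adj {i j : Fin k} :
    (pathGraph k)ᶜ.Adj i j ↔ ¬|((j : ℕ) : ℤ) - ((i : ℕ) : ℤ)| ≤ 1 := by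
  rw [compl_adj, pathGraph_adj, abs_le, ne_eq, Fin.ext_iff]
  omega

theorem statCS_eq_zero_iff {w : Fin (n + 1) → Fin k} :
    statCS w = 0 ↔ ∀ i, (pathGraph k)ᶜ.Adj (w i) (w (i + 1)) := by
  have next (i : Fin (n + 1)) : (⟨(i + 1) % (n + 1), Nat.mod_lt _ i.pos⟩ : Fin (n + 1)) = i + 1 :=
    Fin.ext (by simp [Fin.val_add])
  simp only [statCS, card_eq_zero, filter_eq_empty_iff, mem_univ, forall_true_left, next,
    pathGraph_compl_adj]

theorem card_statCS_eq_zero (R : Type*) [CommSemiring R] (k n : ℕ) :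
    (Nat.card {w : Fin (n + 1) → Fin k | statCS w = 0} : R) =
      ((pathGraph k)ᶜ.adjMatrix R ^ (n + 1)).trace := by
  simp only [trace_adjMatrix_pow_succ, Set.coe_ofPred, statCS_eq_zero_iff]

theorem card_statCS_eq_zero_of_length_zero (k : ℕ) :
    Nat.card {w : Fin 0 → Fin k | statCS w = 0} = 1 := by
  simp [statCS]

theorem eventually_hasSum_card_statCS_eq_zero (k : ℕ) :
    ∀ᶠ x in nhds (0 : ℝ),
      HasSum (fun n : ℕ => (Nat.card {w : Fin n → Fin k | statCS w = 0} : ℝ) * x ^ n)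
        ((1 - x • (pathGraph k)ᶜ.adjMatrix ℝ)⁻¹.trace + (1 - k)) := by
  filter_upwards [eventually_hasSum_trace_pow_mul_pow ((pathGraph k)ᶜ.adjMatrix ℝ)] with x hx
  refine (hx.add (hasSum_ite_eq 0 (1 - k : ℝ))).congr_fun fun n => ?_
  cases n with
  | zero => rw [card_statCS_eq_zero_of_length_zero]; simp
  | succ n => rw [card_statCS_eq_zero]; simp

theorem chebU_eq_eval_chebyshevS (n : ℤ) (x : ℝ) : chebU n x = (S ℝ n).eval (2 * x) := by
  rw [chebU, ← Chebyshev.S_comp_two_mul_X]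
  simp

theorem mul_two_mul_sigm {x : ℝ} (hx : x ≠ 0) : x * (2 * sigm x) = -(1 + x) := by
  rw [sigm]
  field_simp

theorem gam0_eq_pathGamma (k : ℕ) (x : ℝ) : gam0 k x = pathGamma k x (2 * sigm x) := by
  simp only [gam0, pathGamma, chebU_eq_eval_chebyshevS]

end CyclicHertzsprungWords

/-- The generating function of cyclic Hertzsprung words over `k`,
`Σ_{n≥0} #{w ∈ [k]^n : cs(w) = 0} xⁿ`, equals the stated closed-form expression,
wherever the right-hand side is defined (for sufficiently small `x`). -/
theorem gf_of_cyclic_hertzsprung_words (k : ℕ) (hk : 2 ≤ k) :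
    ∃ ε > 0, ∀ x : ℝ, |x| < ε →
      x ≠ 0 →
      1 + 3 * x ≠ 0 →
      1 - 3 * x ≠ 0 →
      1 - x ≠ 0 →
      chebU (k : ℤ) (sigm x) ≠ 0 →
      1 - x * gam0 k x ≠ 0 →
      ∑' n : ℕ, (Nat.card {w : Fin n → Fin k | statCS w = 0} : ℝ) * x ^ n =
        1 + (1 - 3 * x) / ((1 + 3 * x) * (1 - x)) *
          (1 / (1 - x * gam0 k x) +
            2 * x * (k + 1) / ((1 - 3 * x) * chebU (k : ℤ) (sigm x)) *
              ((1 - x * ((1 + k - chebU (k : ℤ) (sigm x)) / (1 + 3 * x))) /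
                  (1 - x * gam0 k x) +
                chebU ((k : ℤ) - 1) (sigm x) - 1) -
            k * x - 1) := by
  obtain ⟨ε, hε, hsum⟩ := Metric.eventually_nhds_iff.mp (eventually_hasSum_card_statCS_eq_zero k)
  refine ⟨ε, hε, fun x hxε hx h₃ h₃' h₁ hU hγ => ?_⟩
  rw [(hsum (by simpa using hxε)).tsum_eq]
  simp only [gam0_eq_pathGamma, chebU_eq_eval_chebyshevS] at hU hγ ⊢
  exact trace_inv_one_sub_smul_compl_add_one_sub (mul_two_mul_sigm hx) h₃ h₃' h₁ hU hγ
end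

section
/- Let k ≥ 2 be an integer, and let x be a real (or rational-function) parameter with x ≠ 0 and U_k((1-x)/(2x)) ≠ 0. Let C(x) be the k×k tridiagonal matrix with diagonal entries 1-x, sub- and super-diagonal entries -x, and all other entries 0, and set ψ = (1-x)/(2x). Then C(x) is invertible and (C(x)^{-1})_{ij} = U_{i-1}(ψ)·U_{k-j}(ψ)/(x·U_k(ψ)) if i ≤ j, and U_{j-1}(ψ)·U_{k-i}(ψ)/(x·U_k(ψ)) if i > j. -/
/-- The `k×k` tridiagonal matrix `C(x)` with diagonal entries `1-x`, sub- and super-diagonal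
entries `-x`, and all other entries `0` (rows and columns indexed by `Fin k`,
corresponding to the 1-based indices `1,…,k`). -/
def Cmat (k : ℕ) (x : ℝ) : Matrix (Fin k) (Fin k) ℝ :=
  Matrix.of fun i j =>
    if (i : ℕ) = (j : ℕ) then 1 - x
    else if (i : ℕ) + 1 = (j : ℕ) ∨ (j : ℕ) + 1 = (i : ℕ) then -x
    else 0
/-!
Writing `2 * ψ * b` for the diagonal and `-b` for the off-diagonals, the matrix acts on a sequence
vanishing at `-1` and `k` as `b` times the operator `f ↦ 2ψ f(m) - f(m-1) - f(m+1)`, whose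
homogeneous equation is the Chebyshev recurrence. The solutions `m ↦ U_m(ψ)` and
`m ↦ U_{k-1-m}(ψ)` satisfy the left and right boundary conditions respectively, so gluing them
along the diagonal gives a Green's function; the jump there is a Casoratian, equal to `U_k(ψ)` by
the addition formula for `U`.
-/

open Polynomial

section Chebyshev

variable {R : Type*} [CommRing R]

theorem chebyshevU_add (m n : ℤ) :
    Chebyshev.U R (m + n) =
      Chebyshev.U R m * Chebyshev.U R n - Chebyshev.U R (m - 1) * Chebyshev.U R (n - 1) := by
  induction n generalizing m with
  | zero => simp
  | succ n ih =>
    rw [show m + (n + 1 : ℤ) = m + 1 + n by ring, ih, Chebyshev.U_add_one R m,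
      Chebyshev.U_add_one R n, add_sub_cancel_right, add_sub_cancel_right]
    ring
  | pred n ih =>
    rw [show m + (-n - 1 : ℤ) = m - 1 + -n by ring, ih, Chebyshev.U_sub_one R (m - 1),
      Chebyshev.U_sub_one R (-n - 1 : ℤ), sub_add_cancel, sub_add_cancel]
    ring

theorem eval_chebyshevU_add_one (n : ℤ) (ψ : R) :
    (Chebyshev.U R (n + 1)).eval ψ =
      2 * ψ * (Chebyshev.U R n).eval ψ - (Chebyshev.U R (n - 1)).eval ψ := by
  simp [Chebyshev.U_add_one]

/-- The Green's function of the operator `f ↦ 2ψ f(m) - f(m-1) - f(m+1)` with zero boundary values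
at `-1` and `k`, up to the factor `U_k(ψ)`. Indices are integers so that the boundary points are
included. -/
noncomputable def chebyshevGreen (k : ℤ) (ψ : R) (m n : ℤ) : R :=
  (Chebyshev.U R (min m n)).eval ψ * (Chebyshev.U R (k - 1 - max m n)).eval ψ

variable (k : ℤ) (ψ : R) {m n : ℤ}

theorem chebyshevGreen_of_le (h : m ≤ n) :
    chebyshevGreen k ψ m n =
      (Chebyshev.U R m).eval ψ * (Chebyshev.U R (k - 1 - n)).eval ψ := by
  rw [chebyshevGreen, min_eq_left h, max_eq_right h]

theorem chebyshevGreen_of_ge (h : n ≤ m) :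
    chebyshevGreen k ψ m n =
      (Chebyshev.U R n).eval ψ * (Chebyshev.U R (k - 1 - m)).eval ψ := by
  rw [chebyshevGreen, min_eq_right h, max_eq_left h]

theorem chebyshevGreen_left_boundary (h : -1 ≤ n) : chebyshevGreen k ψ (-1) n = 0 := by
  simp [chebyshevGreen_of_le k ψ h]

theorem chebyshevGreen_right_boundary (h : n ≤ k) : chebyshevGreen k ψ k n = 0 := by
  simp [chebyshevGreen_of_ge k ψ h]

theorem chebyshevGreen_difference_equation (m n : ℤ) :
    2 * ψ * chebyshevGreen k ψ m n - chebyshevGreen k ψ (m - 1) n - chebyshevGreen k ψ (m + 1) n =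
      if m = n then (Chebyshev.U R k).eval ψ else 0 := by
  rcases lt_trichotomy m n with h | rfl | h
  · rw [chebyshevGreen_of_le k ψ h.le, chebyshevGreen_of_le k ψ (by lia),
      chebyshevGreen_of_le k ψ (by lia), if_neg h.ne, eval_chebyshevU_add_one]
    ring
  · have casoratian := congrArg (eval ψ) (chebyshevU_add (R := R) (m + 1) (k - 1 - m))
    rw [show m + 1 + (k - 1 - m) = k by ring, add_sub_cancel_right, eval_sub, eval_mul, eval_mul,
      eval_chebyshevU_add_one] at casoratian
    rw [chebyshevGreen_of_le k ψ le_rfl, chebyshevGreen_of_le k ψ (by lia),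
      chebyshevGreen_of_ge k ψ (by lia), if_pos rfl, casoratian, ← sub_sub (k - 1)]
    ring
  · have recurrence := eval_chebyshevU_add_one (k - 1 - m) ψ
    rw [chebyshevGreen_of_ge k ψ h.le, chebyshevGreen_of_ge k ψ (by lia),
      chebyshevGreen_of_ge k ψ (by lia), if_neg h.ne', ← sub_add, ← sub_sub (k - 1), recurrence]
    ring

end Chebyshev

section TridiagonalToeplitz

/-- The symmetric tridiagonal Toeplitz matrix of size `k` with diagonal entries `a` and sub- and
super-diagonal entries `b`, generalizing `Cmat`. -/
def tridiagonalToeplitz {R : Type*} [Zero R] (k : ℕ) (a b : R) : Matrix (Fin k) (Fin k) R :=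
  Matrix.of fun i j =>
    if (i : ℕ) = (j : ℕ) then a
    else if (i : ℕ) + 1 = (j : ℕ) ∨ (j : ℕ) + 1 = (i : ℕ) then b
    else 0

theorem sum_fin_ite_intCast_eq {M : Type*} [AddCommMonoid M] {k : ℕ} {f : ℤ → M}
    (hf_neg_one : f (-1) = 0) (hf_k : f k = 0) {m : ℤ} (hm_ge : -1 ≤ m) (hm_le : m ≤ k) :
    ∑ j : Fin k, (if (j : ℤ) = m then f j else 0) = f m := by
  by_cases hm : 0 ≤ m ∧ m < k
  · rw [Finset.sum_eq_single_of_mem (⟨m.toNat, by lia⟩ : Fin k) (Finset.mem_univ _)]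
    · simp [hm.1]
    · exact fun j _ hj => if_neg fun h => hj (Fin.ext (by simp [← h]))
  · have hfm : f m = 0 := by
      obtain rfl | rfl : m = -1 ∨ m = k := by lia
      exacts [hf_neg_one, hf_k]
    rw [hfm]
    exact Finset.sum_eq_zero fun j _ => if_neg (by have := j.isLt; lia)

theorem tridiagonalToeplitz_mulVec_apply {R : Type*} [NonUnitalNonAssocSemiring R] {k : ℕ}
    (a b : R) {f : ℤ → R} (hf_neg_one : f (-1) = 0) (hf_k : f k = 0) (i : Fin k) :
    (tridiagonalToeplitz k a b).mulVec (fun j => f j) i =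
      a * f i + b * f (i - 1) + b * f (i + 1) := by
  have entry_mul (j : Fin k) : tridiagonalToeplitz k a b i j * f j =
      a * (if (j : ℤ) = i then f j else 0) + b * (if (j : ℤ) = i - 1 then f j else 0) +
        b * (if (j : ℤ) = i + 1 then f j else 0) := by
    simp only [tridiagonalToeplitz, Matrix.of_apply]
    split_ifs <;> first | lia | simp
  simp only [Matrix.mulVec, dotProduct, entry_mul, Finset.sum_add_distrib, ← Finset.mul_sum]
  have hi := i.isLt
  rw [sum_fin_ite_intCast_eq hf_neg_one hf_k (m := i) (by lia) (by lia),
    sum_fin_ite_intCast_eq hf_neg_one hf_k (m := i - 1) (by lia) (by lia),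
    sum_fin_ite_intCast_eq hf_neg_one hf_k (m := i + 1) (by lia) (by lia)]

theorem tridiagonalToeplitz_mul_chebyshevGreen {R : Type*} [CommRing R] (k : ℕ) (b ψ : R) :
    tridiagonalToeplitz k (2 * ψ * b) (-b) *
        Matrix.of (fun i j : Fin k => chebyshevGreen k ψ i j) =
      (b * (Chebyshev.U R k).eval ψ) • 1 := by
  ext i j
  calc
    _ = 2 * ψ * b * chebyshevGreen k ψ i j + -b * chebyshevGreen k ψ (i - 1) j +
          -b * chebyshevGreen k ψ (i + 1) j :=
      tridiagonalToeplitz_mulVec_apply _ _ (f := (chebyshevGreen k ψ · j))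
        (chebyshevGreen_left_boundary k ψ (by lia))
        (chebyshevGreen_right_boundary k ψ (mod_cast j.isLt.le)) i
    _ = b * (2 * ψ * chebyshevGreen k ψ i j - chebyshevGreen k ψ (i - 1) j -
          chebyshevGreen k ψ (i + 1) j) := by ring
    _ = _ := by
      simp [chebyshevGreen_difference_equation, Matrix.one_apply, Fin.ext_iff]

theorem inverse_of_tridiagonal_general {K : Type*} [Field K] (k : ℕ) {a b ψ : K}
    (ha : a = 2 * ψ * b) (hb : b ≠ 0) (hU : (Chebyshev.U K k).eval ψ ≠ 0) :
    IsUnit (tridiagonalToeplitz k a (-b)) ∧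
      ∀ i j : Fin k, (tridiagonalToeplitz k a (-b))⁻¹ i j =
        if (i : ℕ) ≤ (j : ℕ) then
          (Chebyshev.U K (i : ℕ)).eval ψ * (Chebyshev.U K ((k : ℤ) - 1 - (j : ℕ))).eval ψ /
            (b * (Chebyshev.U K k).eval ψ)
        else
          (Chebyshev.U K (j : ℕ)).eval ψ * (Chebyshev.U K ((k : ℤ) - 1 - (i : ℕ))).eval ψ /
            (b * (Chebyshev.U K k).eval ψ) := by
  have right_inverse : tridiagonalToeplitz k a (-b) * ((b * (Chebyshev.U K k).eval ψ)⁻¹ •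
      Matrix.of fun i j : Fin k => chebyshevGreen k ψ i j) = 1 := by
    rw [ha, Matrix.mul_smul, tridiagonalToeplitz_mul_chebyshevGreen,
      inv_smul_smul₀ (mul_ne_zero hb hU)]
  refine ⟨.of_mul_eq_one _ right_inverse, fun i j => ?_⟩
  rw [Matrix.inv_eq_right_inv right_inverse, Matrix.smul_apply, Matrix.of_apply, smul_eq_mul,
    inv_mul_eq_div]
  split_ifs with hij
  · rw [chebyshevGreen_of_le k ψ (by lia)]
  · rw [chebyshevGreen_of_ge k ψ (by lia)]

end TridiagonalToeplitz

/-- For `x ≠ 0` with `U_k((1-x)/(2x)) ≠ 0`, the matrix `C(x)` is invertible, and with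
`ψ = (1-x)/(2x)` its inverse has entries (in 1-based indices `i,j ∈ {1,…,k}`)
`(C(x)⁻¹)_{ij} = U_{i-1}(ψ)·U_{k-j}(ψ)/(x·U_k(ψ))` if `i ≤ j`, and
`U_{j-1}(ψ)·U_{k-i}(ψ)/(x·U_k(ψ))` otherwise. -/
theorem inverse_of_tridiagonal (k : ℕ) (hk : 2 ≤ k) (x : ℝ) (hx : x ≠ 0)
    (hU : chebU (k : ℤ) ((1 - x) / (2 * x)) ≠ 0) :
    IsUnit (Cmat k x) ∧
      ∀ i j : Fin k, (Cmat k x)⁻¹ i j =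
        if (i : ℕ) ≤ (j : ℕ) then
          chebU ((i : ℕ) : ℤ) ((1 - x) / (2 * x)) *
            chebU ((k : ℤ) - 1 - (j : ℕ)) ((1 - x) / (2 * x)) /
            (x * chebU (k : ℤ) ((1 - x) / (2 * x)))
        else
          chebU ((j : ℕ) : ℤ) ((1 - x) / (2 * x)) *
            chebU ((k : ℤ) - 1 - (i : ℕ)) ((1 - x) / (2 * x)) /
            (x * chebU (k : ℤ) ((1 - x) / (2 * x))) :=
  inverse_of_tridiagonal_general k (by field_simp) hx hU
end

section
/- Let k ≥ 2 be an integer and let x be a real number with x ≠ 1, x ≠ -1, and U_k(x) ≠ 0. For i ∈ [k] define α_i(x) = (U_{k-i}(x)(U_i(x) - 1) - U_{i-1}(x)(U_{k-i-1}(x) + 1))/U_k(x). Then Σ_{i=1}^{k} α_i(x) = k - (U_k(x) - U_{k-1}(x) - 1)/((x-1)·U_k(x)). -/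
/-- `α_i(x) = (U_{k-i}(x)(U_i(x) - 1) - U_{i-1}(x)(U_{k-i-1}(x) + 1))/U_k(x)`. -/
noncomputable def alph (k : ℕ) (i : ℤ) (x : ℝ) : ℝ :=
  (chebU ((k : ℤ) - i) x * (chebU i x - 1) - chebU (i - 1) x * (chebU ((k : ℤ) - i - 1) x + 1)) /
    chebU (k : ℤ) x

/-!
The addition formula `U_{m+n} = U_m U_n - U_{m-1} U_{n-1}` at `m = k - i`, `n = i` collapses the
numerator of `α_i` to `U_k - U_{i-1} - U_{k-i}`. Summing over `i ∈ [k]`, both `U_{i-1}` and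
`U_{k-i}` run through `U_0, …, U_{k-1}`, and multiplication by `2 (x - 1)` makes the sum of these
telescope, by the three-term recurrence.
-/

section Polynomial

open Polynomial Polynomial.Chebyshev

variable (R : Type*) [CommRing R]

theorem chebyshev_U_add (m n : ℤ) : U R (m + n) = U R m * U R n - U R (m - 1) * U R (n - 1) := by
  have shift (m n : ℤ) :
      U R (m + 1) * U R n - U R m * U R (n - 1) = U R m * U R (n + 1) - U R (m - 1) * U R n := by
    rw [U_add_one R m, U_add_one R n]
    ring
  induction n using Int.induction_on generalizing m with
  | zero => simp
  | succ n ih =>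
    calc U R (m + (n + 1)) = U R (m + 1 + n) := by rw [add_right_comm, add_assoc]
      _ = U R (m + 1) * U R n - U R m * U R (n - 1) := by rw [ih, add_sub_cancel_right]
      _ = U R m * U R (n + 1) - U R (m - 1) * U R (n + 1 - 1) := by
        rw [shift, add_sub_cancel_right]
  | pred n ih =>
    have unshift := shift (m - 1) (-n - 1)
    rw [sub_add_cancel, sub_add_cancel] at unshift
    calc U R (m + (-n - 1)) = U R (m - 1 + -n) := by rw [sub_add_eq_add_sub, add_sub_assoc]
      _ = U R (m - 1) * U R (-n) - U R (m - 1 - 1) * U R (-n - 1) := ih (m - 1)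
      _ = U R m * U R (-n - 1) - U R (m - 1) * U R (-n - 1 - 1) := unshift.symm

theorem alpha_numerator_eq (k i : ℤ) :
    U R (k - i) * (U R i - 1) - U R (i - 1) * (U R (k - i - 1) + 1) =
      U R k - (U R (i - 1) + U R (k - i)) := by
  have h_add : U R k = U R (k - i) * U R i - U R (k - i - 1) * U R (i - 1) := by
    rw [← chebyshev_U_add, sub_add_cancel]
  rw [h_add]
  ring

theorem two_mul_X_sub_one_mul_sum_range_chebyshev_U (n : ℕ) :
    2 * (X - 1) * ∑ j ∈ Finset.range n, U R j = U R n - U R (n - 1) - 1 := by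
  induction n with
  | zero => simp
  | succ n ih =>
    rw [Finset.sum_range_succ, mul_add, ih, Nat.cast_succ, add_sub_cancel_right, U_add_one]
    ring

end Polynomial

theorem sum_Icc_one_natCast {M : Type*} [AddCommMonoid M] (f : ℤ → M) (n : ℕ) :
    ∑ i ∈ Finset.Icc (1 : ℤ) n, f i = ∑ j ∈ Finset.range n, f (j + 1) := by
  simp [Int.Icc_eq_finset_map, add_comm]

theorem sum_Icc_one_sub_eq_sum_range {M : Type*} [AddCommMonoid M] (f : ℤ → M) (n : ℕ) :
    ∑ i ∈ Finset.Icc (1 : ℤ) n, f (n - i) = ∑ j ∈ Finset.range n, f j := by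
  rw [sum_Icc_one_natCast, ← Finset.sum_range_reflect]
  refine Finset.sum_congr rfl fun j hj ↦ congrArg f ?_
  have hj_lt : j < n := Finset.mem_range.mp hj
  omega

open Polynomial Polynomial.Chebyshev in
theorem sum_alpha_general {K : Type*} [Field K] (k : ℕ) {x : K} (hx : x ≠ 1)
    (hU : (U K k).eval x ≠ 0) :
    ∑ i ∈ Finset.Icc (1 : ℤ) k,
        ((U K (k - i)).eval x * ((U K i).eval x - 1) -
          (U K (i - 1)).eval x * ((U K (k - i - 1)).eval x + 1)) / (U K k).eval x =
      k - ((U K k).eval x - (U K (k - 1)).eval x - 1) / ((x - 1) * (U K k).eval x) := by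
  set S := ∑ j ∈ Finset.range k, (U K j).eval x with hS
  have sum_forward : ∑ i ∈ Finset.Icc (1 : ℤ) k, (U K (i - 1)).eval x = S := by
    simp only [sum_Icc_one_natCast, add_sub_cancel_right, hS]
  have sum_backward : ∑ i ∈ Finset.Icc (1 : ℤ) k, (U K (k - i)).eval x = S :=
    sum_Icc_one_sub_eq_sum_range (fun j ↦ (U K j).eval x) k
  have telescoped : 2 * (x - 1) * S = (U K k).eval x - (U K (k - 1)).eval x - 1 := by
    simpa [eval_finsetSum] using
      congrArg (eval x) (two_mul_X_sub_one_mul_sum_range_chebyshev_U K k)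
  have hx' : x - 1 ≠ 0 := sub_ne_zero.mpr hx
  calc
    _ = (∑ i ∈ Finset.Icc (1 : ℤ) k,
          ((U K k).eval x - ((U K (i - 1)).eval x + (U K (k - i)).eval x))) / (U K k).eval x := by
      rw [Finset.sum_div]
      refine Finset.sum_congr rfl fun i _ ↦ congrArg (· / (U K k).eval x) ?_
      simpa using congrArg (eval x) (alpha_numerator_eq K k i)
    _ = (k * (U K k).eval x - (S + S)) / (U K k).eval x := by
      simp [Finset.sum_sub_distrib, Finset.sum_add_distrib, sum_forward, sum_backward]
    _ = k - 2 * (x - 1) * S / ((x - 1) * (U K k).eval x) := by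
      field_simp
      ring
    _ = _ := by rw [telescoped]

/-- `Σ_{i=1}^{k} α_i(x) = k - (U_k(x) - U_{k-1}(x) - 1)/((x-1)·U_k(x))`. -/
theorem sum_alpha (k : ℕ) (hk : 2 ≤ k) (x : ℝ) (hx1 : x ≠ 1) (hx2 : x ≠ -1)
    (hU : chebU (k : ℤ) x ≠ 0) :
    ∑ i ∈ Finset.Icc (1 : ℤ) (k : ℤ), alph k i x =
      k - (chebU (k : ℤ) x - chebU ((k : ℤ) - 1) x - 1) / ((x - 1) * chebU (k : ℤ) x) :=
  sum_alpha_general k hx1 hU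
end

section
/- For every integer k ≥ 1 and every real number x with x² ≠ 1: Σ_{i=1}^{k} U_i(x)² = (U_2(x)·(U_{2k}(x) - 1) - 2x·U_{2k-1}(x) - 2k)/(4(x² - 1)). -/
/-!
The Pell equation `T_{n+1}² - (X² - 1) U_n² = 1`, the duplication formula
`2 T_{n+1}² = T_{2n+2} + 1` and `2 T_{2n+2} = U_{2n+2} - U_{2n}` together give
`4 (X² - 1) U_n² = U_{2n+2} - U_{2n} - 2`. Hence the sum telescopes to `U_{2k+2} - U_2 - 2k`, and
applying the recurrence twice shows `U_{2k+2} = U_2 U_{2k} - 2X U_{2k-1}`.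
-/

/-- Evaluation of the Chebyshev polynomial of the first kind `T_n` at a real `x`
(indices extended to all integers via the Chebyshev recurrence). -/
noncomputable def chebT (n : ℤ) (x : ℝ) : ℝ := (Polynomial.Chebyshev.T ℝ n).eval x

/-- `Z_n(x) = (U_n(x) - U_{n-1}(x) - 1)/(2(x - 1))`. -/
noncomputable def Zc (n : ℤ) (x : ℝ) : ℝ := (chebU n x - chebU (n - 1) x - 1) / (2 * (x - 1))

section

open Polynomial Polynomial.Chebyshev

theorem sum_Ico_int_sub {M : Type*} [AddCommGroup M] (f : ℤ → M) {a b : ℤ} (hab : a ≤ b) :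
    ∑ i ∈ Finset.Ico a b, (f (i + 1) - f i) = f b - f a := by
  induction b, hab using Int.leInduction with
  | base => simp
  | succ b hab ih =>
    rw [← Finset.insert_Ico_right_eq_Ico_add_one hab, Finset.sum_insert (by simp), ih,
      sub_add_sub_cancel]

variable (R : Type*) [CommRing R]

theorem U_sq_add_U_sq (n : ℤ) :
    U R n ^ 2 + U R (n + 1) ^ 2 - 2 * X * U R n * U R (n + 1) = 1 := by
  simp_rw [← S_comp_two_mul_X]
  simpa using congrArg (fun p : R[X] ↦ p.comp (2 * X)) (S_sq_add_S_sq R n)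

theorem T_sq_sub_X_sq_sub_one_mul_U_sq (n : ℤ) :
    T R (n + 1) ^ 2 - (X ^ 2 - 1) * U R n ^ 2 = 1 := by
  have hT : T R (n + 1) = U R (n + 1) - X * U R n := by
    linear_combination -U_eq_X_mul_U_add_T R n
  rw [hT]
  linear_combination U_sq_add_U_sq R n

theorem four_mul_X_sq_sub_one_mul_U_sq (n : ℤ) :
    4 * (X ^ 2 - 1) * U R n ^ 2 = U R (2 * (n + 1)) - U R (2 * n) - 2 := by
  have pell := T_sq_sub_X_sq_sub_one_mul_U_sq R n
  have duplication : 2 * T R (n + 1) ^ 2 = T R (2 * (n + 1)) + 1 := by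
    rw [sq, ← mul_assoc, T_mul_T, sub_self, T_zero, ← two_mul]
  have difference : 2 * T R (2 * (n + 1)) = U R (2 * (n + 1)) - U R (2 * n) :=
    mul_add_one (2 : ℤ) n ▸ two_mul_T_eq_U_sub_U R (2 * n)
  linear_combination -4 * pell + 2 * duplication + difference

theorem four_mul_X_sq_sub_one_mul_sum_Ico_U_sq {a b : ℤ} (hab : a ≤ b) :
    4 * (X ^ 2 - 1) * ∑ i ∈ Finset.Ico a b, U R i ^ 2 =
      U R (2 * b) - U R (2 * a) - 2 * ((b : R[X]) - (a : R[X])) := by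
  let f (i : ℤ) : R[X] := U R (2 * i) - 2 * (i : R[X])
  have difference (i : ℤ) : 4 * (X ^ 2 - 1) * U R i ^ 2 = f (i + 1) - f i := by
    simp only [f, Int.cast_add, Int.cast_one]
    linear_combination four_mul_X_sq_sub_one_mul_U_sq R i
  simp_rw [Finset.mul_sum, difference, sum_Ico_int_sub f hab, f]
  ring

theorem U_two_mul_U_sub (n : ℤ) : U R 2 * U R n - 2 * X * U R (n - 1) = U R (n + 2) := by
  rw [U_two, U_add_two, U_add_one]
  ring

theorem sum_U_sq_general (k : ℕ) :
    4 * (X ^ 2 - 1) * ∑ i ∈ Finset.Icc (1 : ℤ) k, U R i ^ 2 =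
      U R 2 * (U R (2 * k) - 1) - 2 * X * U R (2 * k - 1) - 2 * (k : R[X]) := by
  have telescoped := four_mul_X_sq_sub_one_mul_sum_Ico_U_sq R (a := 1) (b := k + 1) (by lia)
  rw [Finset.Ico_add_one_right_eq_Icc, mul_add_one, mul_one] at telescoped
  push_cast at telescoped
  linear_combination telescoped - U_two_mul_U_sub R (2 * k)

end

/-- `Σ_{i=1}^{k} U_i(x)² = (U_2(x)·(U_{2k}(x) - 1) - 2x·U_{2k-1}(x) - 2k)/(4(x² - 1))`. -/
theorem sum_U_sq (k : ℕ) (hk : 1 ≤ k) (x : ℝ) (hx : x ^ 2 ≠ 1) :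
    ∑ i ∈ Finset.Icc (1 : ℤ) (k : ℤ), chebU i x ^ 2 =
      (chebU 2 x * (chebU (2 * (k : ℤ)) x - 1) - 2 * x * chebU (2 * (k : ℤ) - 1) x - 2 * k) /
        (4 * (x ^ 2 - 1)) := by
  rw [eq_div_iff (mul_ne_zero four_ne_zero (sub_ne_zero.mpr hx)), mul_comm]
  simpa [chebU, Polynomial.eval_finsetSum] using congrArg (·.eval x) (sum_U_sq_general ℝ k)
end

section
/- For every integer k ≥ 1 and every real number x with x² ≠ 1: Σ_{i=1}^{k} U_{i-1}(x)·U_i(x) = (2x·U_{2k}(x) - U_{2k-1}(x) - 2(k+1)x)/(4(x² - 1)). -/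
/-!
The product formula `2 (x² - 1) U_m U_n = T_{m+n+2} - T_{m-n}` and `2 T_{n+2} = U_{n+2} - U_n` give
`4 (x² - 1) U_{i-1} U_i = U_{2i+1} - U_{2i-1} - 2x`, which telescopes when summed over `i`.
-/

section

open Polynomial Polynomial.Chebyshev

theorem sum_Icc_int_sub_pred {M : Type*} [AddCommGroup M] (f : ℤ → M) {a b : ℤ} (hab : a ≤ b + 1) :
    ∑ i ∈ Finset.Icc a b, (f i - f (i - 1)) = f b - f (a - 1) := by
  obtain ⟨n, hn⟩ := Int.eq_ofNat_of_zero_le (sub_nonneg.mpr hab)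
  obtain rfl : b = a - 1 + n := by omega
  clear hn hab
  induction n with
  | zero => simp
  | succ n ih =>
    have insert_top : insert (a - 1 + n + 1) (Finset.Icc a (a - 1 + n)) =
        Finset.Icc a (a - 1 + n + 1) :=
      Finset.insert_Icc_right_eq_Icc_add_one (by omega)
    rw [Nat.cast_succ, ← add_assoc, ← insert_top, Finset.sum_insert (by simp), ih,
      add_sub_cancel_right, sub_add_sub_cancel]

section CommRing

variable (R : Type*) [CommRing R]

theorem two_mul_X_sq_sub_one_mul_U_mul_U (m n : ℤ) :
    2 * (X ^ 2 - 1) * (U R m * U R n) = T R (m + n + 2) - T R (m - n) := by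
  induction n using Polynomial.Chebyshev.induct with
  | zero =>
    rw [U_zero, add_zero, sub_zero]
    linear_combination T_add_two R m - 2 * one_sub_X_sq_mul_U_eq_pol_in_T R m
  | one =>
    have hT := T_add_two R (m + 1)
    have hT' := T_sub_one R m
    rw [U_one]
    linear_combination (norm := ring_nf)
      -4 * X * one_sub_X_sq_mul_U_eq_pol_in_T R m - hT + hT' + 2 * X * T_add_two R m
  | add_two n ih1 ih2 =>
    have hU := U_add_two R n
    have hT := T_add_two R (m + n + 2)
    have hT' := T_sub_two R (m - n)
    linear_combination (norm := ring_nf)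
      2 * (X ^ 2 - 1) * U R m * hU - hT + hT' + 2 * (X : R[X]) * ih1 - ih2
  | neg_add_one n ih1 ih2 =>
    have hU := U_sub_one R (-n)
    have hT := T_sub_one R (m - n + 2)
    have hT' := T_add_one R (m + n)
    linear_combination (norm := ring_nf)
      2 * (X ^ 2 - 1) * U R m * hU - hT + hT' + 2 * (X : R[X]) * ih1 - ih2

theorem four_mul_X_sq_sub_one_mul_U_pred_mul_U (n : ℤ) :
    4 * (X ^ 2 - 1) * (U R (n - 1) * U R n) = U R (2 * n + 1) - U R (2 * n - 1) - 2 * X := by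
  have product := two_mul_X_sq_sub_one_mul_U_mul_U R (n - 1) n
  have difference := two_mul_T_eq_U_sub_U R (2 * n - 1)
  rw [show n - 1 + n + 2 = 2 * n + 1 by ring, show n - 1 - n = -1 by ring, T_neg_one] at product
  rw [show 2 * n - 1 + 2 = 2 * n + 1 by ring] at difference
  linear_combination 2 * product + difference

theorem four_mul_X_sq_sub_one_mul_sum_U_pred_mul_U (k : ℕ) :
    4 * (X ^ 2 - 1) * ∑ i ∈ Finset.Icc (1 : ℤ) k, U R (i - 1) * U R i =
      U R (2 * k + 1) - 2 * ((k : R[X]) + 1) * X := by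
  have telescope := sum_Icc_int_sub_pred (fun i ↦ U R (2 * i + 1)) (a := 1) (b := k) (by omega)
  calc
    _ = ∑ i ∈ Finset.Icc (1 : ℤ) k, (U R (2 * i + 1) - U R (2 * (i - 1) + 1) - 2 * X) := by
      rw [Finset.mul_sum]
      refine Finset.sum_congr rfl fun i _ ↦ ?_
      rw [four_mul_X_sq_sub_one_mul_U_pred_mul_U, show 2 * (i - 1) + 1 = 2 * i - 1 by ring]
    _ = U R (2 * k + 1) - U R 1 - (k : R[X]) * (2 * X) := by
      rw [Finset.sum_sub_distrib, telescope, Finset.sum_const, Int.card_Icc]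
      simp
    _ = U R (2 * k + 1) - 2 * ((k : R[X]) + 1) * X := by
      rw [U_one]
      ring

end CommRing

theorem sum_U_pred_mul_U_general {K : Type*} [Field K] [NeZero (2 : K)] (k : ℕ) (x : K)
    (hx : x ^ 2 ≠ 1) :
    ∑ i ∈ Finset.Icc (1 : ℤ) k, (U K (i - 1)).eval x * (U K i).eval x =
      (2 * x * (U K (2 * k)).eval x - (U K (2 * k - 1)).eval x - 2 * (k + 1) * x) /
        (4 * (x ^ 2 - 1)) := by
  have denom_ne_zero : 4 * (x ^ 2 - 1) ≠ 0 := by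
    rw [show (4 : K) = 2 * 2 by norm_num]
    exact mul_ne_zero (mul_ne_zero two_ne_zero two_ne_zero) (sub_ne_zero.mpr hx)
  have identity := congr_arg (eval x) (four_mul_X_sq_sub_one_mul_sum_U_pred_mul_U K k)
  rw [U_add_one] at identity
  rw [eq_div_iff denom_ne_zero, mul_comm]
  simpa [eval_finsetSum] using identity

end

/-- `Σ_{i=1}^{k} U_{i-1}(x)·U_i(x) = (2x·U_{2k}(x) - U_{2k-1}(x) - 2(k+1)x)/(4(x² - 1))`. -/
theorem sum_U_pred_mul_U (k : ℕ) (hk : 1 ≤ k) (x : ℝ) (hx : x ^ 2 ≠ 1) :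
    ∑ i ∈ Finset.Icc (1 : ℤ) (k : ℤ), chebU (i - 1) x * chebU i x =
      (2 * x * chebU (2 * (k : ℤ)) x - chebU (2 * (k : ℤ) - 1) x - 2 * (k + 1) * x) /
        (4 * (x ^ 2 - 1)) := by
  exact sum_U_pred_mul_U_general k x hx
end
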